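/- arXiv:2505.10470 — 8 statements merged into one kernel-verified Lean document; each statement's English description precedes it below -/
import Mathlib

section
/- Let n ≥ 2, let c, x ∈ ℝⁿ and r, p > 0 with |c − x| = p + r (tangent balls, i.e. δ = 0), and set v = (p/(p+r))·c + (r/(p+r))·x. Then for w ∈ ℝⁿ with |w| = 1 and b ∈ ℝ, the hyperplane H[w;b] separates the open balls B[c,r] and B[x,p] if and only if w = ±(c − x)/|c − x| and b = ⟪w, v⟫. In particular, exactly one hyperplane (as a set) separates the two balls, namely the hyperplane through v orthogonal to c − x. -/
open MeasureTheory Metric Real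
open scoped RealInnerProductSpace

/-- `H[w;b]` separates `B[c,r]` and `B[x,p]`: the linear functional `u ↦ ⟪w,u⟫ - b`
is positive on one open ball and negative on the other. -/
def Separates {n : ℕ} (w : EuclideanSpace ℝ (Fin n)) (b : ℝ)
    (c : EuclideanSpace ℝ (Fin n)) (r : ℝ)
    (x : EuclideanSpace ℝ (Fin n)) (p : ℝ) : Prop :=
  ((∀ u ∈ ball c r, 0 < ⟪w, u⟫ - b) ∧ (∀ u ∈ ball x p, ⟪w, u⟫ - b < 0)) ∨
  ((∀ u ∈ ball c r, ⟪w, u⟫ - b < 0) ∧ (∀ u ∈ ball x p, 0 < ⟪w, u⟫ - b))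

lemma pos_iff {n : ℕ} (w : EuclideanSpace ℝ (Fin n)) (hw : ‖w‖ = 1) (b : ℝ)
    (c : EuclideanSpace ℝ (Fin n)) (r : ℝ) (hr : 0 < r) :
    (∀ u ∈ ball c r, 0 < ⟪w, u⟫ - b) ↔ r ≤ ⟪w, c⟫ - b := by
  constructor
  · intro h
    by_contra hlt
    push Not at hlt
    have h0 := h c (mem_ball_self hr)
    have h1 := h (c - (⟪w, c⟫ - b) • w) (by
      rw [mem_ball_iff_norm]
      simp only [sub_sub_cancel_left, norm_neg, norm_smul, hw, mul_one, Real.norm_eq_abs]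
      rwa [abs_of_pos h0])
    rw [inner_sub_right, real_inner_smul_right, real_inner_self_eq_norm_sq, hw] at h1
    linarith
  · intro h u hu
    rw [mem_ball_iff_norm'] at hu
    have h1 := real_inner_le_norm w (c - u)
    rw [hw, one_mul, inner_sub_right] at h1
    linarith

lemma neg_iff {n : ℕ} (w : EuclideanSpace ℝ (Fin n)) (hw : ‖w‖ = 1) (b : ℝ)
    (c : EuclideanSpace ℝ (Fin n)) (r : ℝ) (hr : 0 < r) :
    (∀ u ∈ ball c r, ⟪w, u⟫ - b < 0) ↔ ⟪w, c⟫ - b ≤ -r := by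
  have h := pos_iff (-w) (by rwa [norm_neg]) (-b) c r hr
  simp only [inner_neg_left] at h
  constructor
  · intro h1
    have := h.1 (fun u hu => by linarith [h1 u hu])
    linarith
  · intro h1 u hu
    linarith [h.2 (by linarith) u hu]

lemma core {n : ℕ} (c x : EuclideanSpace ℝ (Fin n)) (r p : ℝ)
    (hr : 0 < r) (hp : 0 < p) (htan : ‖c - x‖ = p + r)
    (w : EuclideanSpace ℝ (Fin n)) (hw : ‖w‖ = 1) (b : ℝ) :
    (r ≤ ⟪w, c⟫ - b ∧ ⟪w, x⟫ - b ≤ -p) ↔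
      (w = ‖c - x‖⁻¹ • (c - x) ∧ b = ⟪w, (p / (p + r)) • c + (r / (p + r)) • x⟫) := by
  have hpr : p + r ≠ 0 := by positivity
  have hw' : w = ‖c - x‖⁻¹ • (c - x) ↔ ⟪w, c⟫ - ⟪w, x⟫ = p + r := by
    have h := inner_eq_norm_mul_iff_real (x := w) (y := c - x)
    rw [hw, one_mul, one_smul, inner_sub_right] at h
    rw [eq_inv_smul_iff₀ (by rw [htan]; exact hpr), ← h, htan]
  have hle := real_inner_le_norm w (c - x)
  rw [hw, one_mul, inner_sub_right, htan] at hle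
  rw [hw', inner_add_right, real_inner_smul_right, real_inner_smul_right]
  have key : ⟪w, c⟫ - ⟪w, x⟫ = p + r →
      p / (p + r) * ⟪w, c⟫ + r / (p + r) * ⟪w, x⟫ = ⟪w, c⟫ - r := by
    intro h
    have hx : ⟪w, x⟫ = ⟪w, c⟫ - (p + r) := by linarith
    rw [hx]
    field_simp
    ring
  constructor
  · rintro ⟨h1, h2⟩
    have h3 : ⟪w, c⟫ - ⟪w, x⟫ = p + r := by linarith
    refine ⟨h3, ?_⟩
    rw [key h3]
    linarith
  · rintro ⟨h1, h2⟩
    rw [key h1] at h2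
    constructor <;> linarith

theorem stmt2 (n : ℕ) (hn : 2 ≤ n) (c x : EuclideanSpace ℝ (Fin n)) (r p : ℝ)
    (hr : 0 < r) (hp : 0 < p) (htan : ‖c - x‖ = p + r)
    (v : EuclideanSpace ℝ (Fin n))
    (hv : v = (p / (p + r)) • c + (r / (p + r)) • x)
    (w : EuclideanSpace ℝ (Fin n)) (hw : ‖w‖ = 1) (b : ℝ) :
    Separates w b c r x p ↔
      ((w = ‖c - x‖⁻¹ • (c - x) ∨ w = -(‖c - x‖⁻¹ • (c - x))) ∧ b = ⟪w, v⟫) := by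
  have h1 := core c x r p hr hp htan w hw b
  have h2 := core c x r p hr hp htan (-w) (by rwa [norm_neg]) (-b)
  rw [← hv] at h1 h2
  rw [neg_eq_iff_eq_neg, inner_neg_left, inner_neg_left, inner_neg_left, neg_inj] at h2
  unfold Separates
  rw [pos_iff w hw b c r hr, neg_iff w hw b x p hp, neg_iff w hw b c r hr,
    pos_iff w hw b x p hp, h1, or_and_right, ← h2]
  refine or_congr Iff.rfl ?_
  constructor <;> rintro ⟨h, h'⟩ <;> constructor <;> linarith
end

section
/- Let n ≥ 2, let c, x ∈ ℝⁿ and r, p > 0 with |c − x| = p + r + δ for some δ > 0, let ω = (x − c)/|x − c|, let k ≥ max(|c|, |x|) > 0, and let 𝔟 be uniformly distributed on [−k, k]. Then the probability that the hyperplane H[ω;𝔟] separates B[c,r] and B[x,p] equals δ/(2k). -/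
open MeasureTheory Metric Real
open scoped RealInnerProductSpace

theorem stmt4 (n : ℕ) (hn : 2 ≤ n) (c x : EuclideanSpace ℝ (Fin n)) (r p δ k : ℝ)
    (hr : 0 < r) (hp : 0 < p) (hδ : 0 < δ) (hdist : ‖c - x‖ = p + r + δ)
    (hk : max ‖c‖ ‖x‖ ≤ k) (hk0 : 0 < max ‖c‖ ‖x‖)
    (ω : EuclideanSpace ℝ (Fin n)) (hω : ω = ‖x - c‖⁻¹ • (x - c))
    (μ : Measure ℝ)
    (hμ : μ = (ENNReal.ofReal (2 * k))⁻¹ • volume.restrict (Set.Icc (-k) k)) :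
    μ {b : ℝ | Separates ω b c r x p} = ENNReal.ofReal (δ / (2 * k)) := by
  have hkpos : 0 < k := lt_of_lt_of_le hk0 hk
  have hD : ‖x - c‖ = p + r + δ := by rw [norm_sub_rev]; exact hdist
  have hDpos : 0 < ‖x - c‖ := by rw [hD]; positivity
  have hω1 : ‖ω‖ = 1 := by
    rw [hω, norm_smul, norm_inv, norm_norm, inv_mul_cancel₀ hDpos.ne']
  have hωω : ⟪ω, ω⟫ = 1 := by rw [real_inner_self_eq_norm_sq, hω1]; norm_num
  have hxc : ⟪ω, x⟫ = ⟪ω, c⟫ + (p + r + δ) := by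
    have h : ⟪ω, x - c⟫ = ‖x - c‖ := by
      rw [hω, real_inner_smul_left, real_inner_self_eq_norm_sq]
      field_simp
    rw [inner_sub_right, hD] at h
    linarith
  have hc : |⟪ω, c⟫| ≤ k := by
    have := abs_real_inner_le_norm ω c
    rw [hω1, one_mul] at this
    exact this.trans ((le_max_left _ _).trans hk)
  have hx : |⟪ω, x⟫| ≤ k := by
    have := abs_real_inner_le_norm ω x
    rw [hω1, one_mul] at this
    exact this.trans ((le_max_right _ _).trans hk)
  have hset : {b : ℝ | Separates ω b c r x p} = Set.Icc (⟪ω, c⟫ + r) (⟪ω, x⟫ - p) := by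
    ext b
    simp only [Set.mem_setOf_eq, Set.mem_Icc, Separates]
    constructor
    · rintro (⟨h1, h2⟩ | ⟨h1, h2⟩)
      · have a1 := h1 c (mem_ball_self hr)
        have a2 := h2 x (mem_ball_self hp)
        linarith
      · constructor
        · by_contra! hlt
          have a0 := h1 c (mem_ball_self hr)
          have a1 := h1 (c + (b - ⟪ω, c⟫) • ω) (by
            rw [mem_ball, dist_eq_norm, add_sub_cancel_left, norm_smul, hω1, mul_one,
              Real.norm_eq_abs, abs_lt]
            constructor <;> linarith)
          rw [inner_add_right, real_inner_smul_right, hωω] at a1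
          linarith
        · by_contra! hlt
          have a0 := h2 x (mem_ball_self hp)
          have a1 := h2 (x + (b - ⟪ω, x⟫) • ω) (by
            rw [mem_ball, dist_eq_norm, add_sub_cancel_left, norm_smul, hω1, mul_one,
              Real.norm_eq_abs, abs_lt]
            constructor <;> linarith)
          rw [inner_add_right, real_inner_smul_right, hωω] at a1
          linarith
    · rintro ⟨h1, h2⟩
      have key : ∀ y u : EuclideanSpace ℝ (Fin n), ∀ t : ℝ, u ∈ ball y t →
          |⟪ω, u⟫ - ⟪ω, y⟫| < t := by
        intro y u t hu
        have := abs_real_inner_le_norm ω (u - y)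
        rw [hω1, one_mul, inner_sub_right] at this
        rw [mem_ball, dist_eq_norm] at hu
        exact this.trans_lt hu
      right
      constructor
      · intro u hu
        have := (abs_lt.mp (key c u r hu)).2
        linarith
      · intro u hu
        have := (abs_lt.mp (key x u p hu)).1
        linarith
  have hsub : Set.Icc (⟪ω, c⟫ + r) (⟪ω, x⟫ - p) ⊆ Set.Icc (-k) k := by
    apply Set.Icc_subset_Icc
    · linarith [(abs_le.mp hc).1]
    · linarith [(abs_le.mp hx).2]
  rw [hset, hμ, Measure.smul_apply, Measure.restrict_apply measurableSet_Icc,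
    Set.inter_eq_left.mpr hsub, Real.volume_Icc, smul_eq_mul,
    ENNReal.ofReal_div_of_pos (by positivity), ENNReal.div_eq_inv_mul]
  congr 2
  rw [hxc]; ring
end

section
/- Let n ≥ 2, let c, x ∈ ℝⁿ and r, p > 0 with |c − x| = p + r + δ for some δ > 0, and let 𝔴 be uniformly distributed on the unit sphere S^{n−1} ⊂ ℝⁿ. Set 𝒬 = 1 − ((p+r)/(p+r+δ))² and v = (p/(p+r))·c + (r/(p+r))·x. Then the probability that there exists b ∈ ℝ such that H[𝔴;b] separates B[c,r] and B[x,p] equals I(𝒬; (n−1)/2, 1/2), and this also equals the probability that the hyperplane H[𝔴; ⟪𝔴,v⟫] through v separates B[c,r] and B[x,p]. -/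
open MeasureTheory Metric Real
open scoped RealInnerProductSpace

/-- The Beta function `B(y,z) = Γ(y)Γ(z)/Γ(y+z)`. -/
noncomputable def realBeta (y z : ℝ) : ℝ := Gamma y * Gamma z / Gamma (y + z)

/-- The regularized incomplete beta function `I(κ; y, z)`. -/
noncomputable def regIncBeta (κ y z : ℝ) : ℝ :=
  (∫ s in (0:ℝ)..κ, s ^ (y - 1) * (1 - s) ^ (z - 1)) / realBeta y z

/-- The uniform (rotation-invariant, normalized surface) probability measure on
the unit sphere of `ℝⁿ`. -/
noncomputable def uniformSphere (n : ℕ) :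
    Measure (Metric.sphere (0 : EuclideanSpace ℝ (Fin n)) 1) :=
  ((volume : Measure (EuclideanSpace ℝ (Fin n))).toSphere Set.univ)⁻¹ •
    (volume : Measure (EuclideanSpace ℝ (Fin n))).toSphere


lemma aux_inner (m : ℕ) (a : ℝ) (ha : 0 < a) :
    ∫⁻ y in Set.Ioo (-a) a, ENNReal.ofReal (|y| ^ m) = ENNReal.ofReal (2 / (m + 1) * a ^ (m + 1)) := by
  rw [← ofReal_integral_eq_lintegral_ofReal]
  · congr 1
    have h := integral_comp_abs (f := (Set.Iio a).indicator (fun y : ℝ => y ^ m))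
    have h1 : (fun y : ℝ => (Set.Iio a).indicator (fun y : ℝ => y ^ m) |y|) =
        (Set.Ioo (-a) a).indicator (fun y => |y| ^ m) := by
      ext y
      simp [Set.indicator, abs_lt]
    rw [h1, integral_indicator measurableSet_Ioo] at h
    rw [h, setIntegral_indicator measurableSet_Iio, Set.Ioi_inter_Iio,
      ← integral_Ioc_eq_integral_Ioo, ← intervalIntegral.integral_of_le ha.le, integral_pow]
    simp
    ring
  · exact (Continuous.integrableOn_Icc (by fun_prop)).mono_set Set.Ioo_subset_Icc_self
  · exact Filter.Eventually.of_forall fun y => by positivity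

lemma aux_sqrt (y ρ : ℝ) : y ^ 2 * (1 + ρ ^ 2) < 1 ↔
    y ∈ Set.Ioo (-(√(1 + ρ ^ 2))⁻¹) (√(1 + ρ ^ 2))⁻¹ := by
  have h : 0 < 1 + ρ ^ 2 := by positivity
  rw [Set.mem_Ioo, ← abs_lt, ← Real.sqrt_inv, Real.lt_sqrt (abs_nonneg _), sq_abs,
    ← one_div, lt_div_iff₀ h]

lemma aux_meas (m : ℕ) (T : ℝ) :
    MeasurableSet {q : ℝ × EuclideanSpace ℝ (Fin m) | q.1 ^ 2 + ‖q.2‖ ^ 2 < 1 ∧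
      T ^ 2 * (q.1 ^ 2 + ‖q.2‖ ^ 2) ≤ q.1 ^ 2} := by
  exact MeasurableSet.inter (s₁ := {q : ℝ × EuclideanSpace ℝ (Fin m) | q.1 ^ 2 + ‖q.2‖ ^ 2 < 1})
      (s₂ := {q | T ^ 2 * (q.1 ^ 2 + ‖q.2‖ ^ 2) ≤ q.1 ^ 2})
      (measurableSet_lt (by fun_prop) (by fun_prop)) (measurableSet_le (by fun_prop) (by fun_prop))

lemma aux_slice (m : ℕ) (T : ℝ) :
    volume {q : ℝ × EuclideanSpace ℝ (Fin m) | q.1 ^ 2 + ‖q.2‖ ^ 2 < 1 ∧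
      T ^ 2 * (q.1 ^ 2 + ‖q.2‖ ^ 2) ≤ q.1 ^ 2} =
    ∫⁻ z : EuclideanSpace ℝ (Fin m), ENNReal.ofReal
      ({ρ : ℝ | T ^ 2 * (1 + ρ ^ 2) ≤ 1}.indicator
        (fun ρ => 2 / (m + 1) * (√(1 + ρ ^ 2))⁻¹ ^ (m + 1)) ‖z‖) := by
  rw [Measure.volume_eq_prod, Measure.prod_apply]
  swap
  · exact aux_meas m T
  set D : Set (ℝ × EuclideanSpace ℝ (Fin m)) := {q | q.1 ^ 2 * (1 + ‖q.2‖ ^ 2) < 1 ∧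
      T ^ 2 * (1 + ‖q.2‖ ^ 2) ≤ 1} with hD
  have hDm : MeasurableSet D := by
    exact MeasurableSet.inter (s₁ := {q : ℝ × EuclideanSpace ℝ (Fin m) | q.1 ^ 2 * (1 + ‖q.2‖ ^ 2) < 1})
      (s₂ := {q | T ^ 2 * (1 + ‖q.2‖ ^ 2) ≤ 1})
      (measurableSet_lt (by fun_prop) (by fun_prop)) (measurableSet_le (by fun_prop) (by fun_prop))
  have key : ∀ᵐ y : ℝ, volume (Prod.mk y ⁻¹' {q : ℝ × EuclideanSpace ℝ (Fin m) |
      q.1 ^ 2 + ‖q.2‖ ^ 2 < 1 ∧ T ^ 2 * (q.1 ^ 2 + ‖q.2‖ ^ 2) ≤ q.1 ^ 2}) =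
      ∫⁻ z : EuclideanSpace ℝ (Fin m), D.indicator (fun q => ENNReal.ofReal (|q.1| ^ m)) (y, z) := by
    filter_upwards [compl_mem_ae_iff.mpr (measure_singleton (0 : ℝ))] with y hy
    have hy : y ≠ 0 := hy
    have e1 := Measure.addHaar_preimage_smul (volume : Measure (EuclideanSpace ℝ (Fin m))) hy
      (Prod.mk y ⁻¹' {q : ℝ × EuclideanSpace ℝ (Fin m) |
      q.1 ^ 2 + ‖q.2‖ ^ 2 < 1 ∧ T ^ 2 * (q.1 ^ 2 + ‖q.2‖ ^ 2) ≤ q.1 ^ 2})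
    have e2 : (fun z : EuclideanSpace ℝ (Fin m) => y • z) ⁻¹' (Prod.mk y ⁻¹' {q : ℝ × EuclideanSpace ℝ (Fin m) |
      q.1 ^ 2 + ‖q.2‖ ^ 2 < 1 ∧ T ^ 2 * (q.1 ^ 2 + ‖q.2‖ ^ 2) ≤ q.1 ^ 2}) = Prod.mk y ⁻¹' D := by
      ext z
      have hy2 : 0 < y ^ 2 := by positivity
      simp only [hD, Set.mem_preimage, Set.mem_ofPred_eq, norm_smul, mul_pow, Real.norm_eq_abs, sq_abs]
      have : T ^ 2 * (y ^ 2 + y ^ 2 * ‖z‖ ^ 2) = y ^ 2 * (T ^ 2 * (1 + ‖z‖ ^ 2)) := by ring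
      rw [this, mul_le_iff_le_one_right hy2]
      ring_nf
    rw [e2, finrank_euclideanSpace_fin] at e1
    have e3 : (fun z => D.indicator (fun q => ENNReal.ofReal (|q.1| ^ m)) (y, z)) =
        (Prod.mk y ⁻¹' D).indicator (fun _ => ENNReal.ofReal (|y| ^ m)) := by
      ext z; simp [Set.indicator]
    rw [e3, lintegral_indicator_const (measurable_prodMk_left hDm), e1, ← mul_assoc,
      ← ENNReal.ofReal_mul (by positivity), abs_inv, abs_pow, mul_inv_cancel₀ (by positivity)]
    simp
  rw [lintegral_congr_ae key, lintegral_lintegral_swap]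
  swap
  · exact Measurable.aemeasurable ((Measurable.indicator (by fun_prop) hDm))
  refine lintegral_congr fun z => ?_
  by_cases hz : T ^ 2 * (1 + ‖z‖ ^ 2) ≤ 1
  · rw [Set.indicator_of_mem (by exact hz), ← aux_inner _ _ (by positivity),
      ← lintegral_indicator measurableSet_Ioo]
    refine lintegral_congr fun y => ?_
    have := aux_sqrt y ‖z‖
    simp only [Set.indicator, hD, Set.mem_ofPred_eq, hz, and_true, this]
  · rw [Set.indicator_of_notMem (by exact hz)]
    simp [Set.indicator, hD, hz]

lemma aux_real (m : ℕ) (hm : 1 ≤ m) (T : ℝ) :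
    (volume {q : ℝ × EuclideanSpace ℝ (Fin m) | q.1 ^ 2 + ‖q.2‖ ^ 2 < 1 ∧
      T ^ 2 * (q.1 ^ 2 + ‖q.2‖ ^ 2) ≤ q.1 ^ 2}).toReal =
    (m * (volume : Measure (EuclideanSpace ℝ (Fin m))).real (ball 0 1) * (2 / (m + 1))) *
    ∫ ρ in Set.Ioi 0 ∩ {ρ : ℝ | T ^ 2 * (1 + ρ ^ 2) ≤ 1},
      ρ ^ (m - 1) * (√(1 + ρ ^ 2))⁻¹ ^ (m + 1) := by
  have hms : MeasurableSet {ρ : ℝ | T ^ 2 * (1 + ρ ^ 2) ≤ 1} :=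
    measurableSet_le (by fun_prop) (by fun_prop)
  have : Nontrivial (EuclideanSpace ℝ (Fin m)) := by
    have : Nonempty (Fin m) := ⟨⟨0, hm⟩⟩
    infer_instance
  rw [aux_slice, ← integral_eq_lintegral_of_nonneg_ae, integral_fun_norm_addHaar volume]
  · rw [← setIntegral_indicator hms, finrank_euclideanSpace_fin]
    simp only [smul_eq_mul, nsmul_eq_mul]
    rw [mul_assoc, mul_assoc, ← integral_const_mul (2 / ((m:ℝ) + 1))]
    congr 3
    ext ρ
    by_cases h : ρ ∈ {ρ : ℝ | T ^ 2 * (1 + ρ ^ 2) ≤ 1}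
    · rw [Set.indicator_of_mem h, Set.indicator_of_mem h]; ring
    · rw [Set.indicator_of_notMem h, Set.indicator_of_notMem h]; ring
  · exact Filter.Eventually.of_forall fun z => Set.indicator_nonneg (fun ρ _ => by positivity) _
  · refine Measurable.aestronglyMeasurable ?_
    exact (Measurable.indicator (by fun_prop) hms).comp measurable_norm

lemma aux_integrand (m : ℕ) (hm : 1 ≤ m) (ρ : ℝ) (hρ : 0 < ρ) :
    |2 * ρ / (1 + ρ ^ 2) ^ 2| • ((ρ ^ 2 / (1 + ρ ^ 2)) ^ ((m : ℝ) / 2 - 1) *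
      (1 - ρ ^ 2 / (1 + ρ ^ 2)) ^ ((1 : ℝ) / 2 - 1)) =
    2 * (ρ ^ (m - 1) * (√(1 + ρ ^ 2))⁻¹ ^ (m + 1)) := by
  have h0 : 0 < 1 + ρ ^ 2 := by positivity
  set R := √(1 + ρ ^ 2) with hR
  have hRp : 0 < R := Real.sqrt_pos.mpr h0
  have hR2 : 1 + ρ ^ 2 = R ^ 2 := (Real.sq_sqrt h0.le).symm
  have e1 : 1 - ρ ^ 2 / (1 + ρ ^ 2) = (R⁻¹) ^ 2 := by
    rw [eq_comm, inv_pow, ← hR2]; field_simp; ring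
  have e2 : ρ ^ 2 / (1 + ρ ^ 2) = (ρ / R) ^ 2 := by rw [hR2, div_pow]
  rw [e1, e2, hR2, abs_of_pos (by positivity), ← Real.rpow_natCast_mul (by positivity),
    ← Real.rpow_natCast_mul (by positivity)]
  have e3 : ((2 : ℕ) : ℝ) * ((m : ℝ) / 2 - 1) = (m : ℝ) - (2 : ℕ) := by push_cast; ring
  have e4 : ((2 : ℕ) : ℝ) * ((1 : ℝ) / 2 - 1) = -1 := by norm_num
  rw [e3, e4, Real.rpow_neg_one, Real.rpow_sub (by positivity), Real.rpow_natCast,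
    Real.rpow_natCast, inv_inv, smul_eq_mul]
  obtain ⟨k, rfl⟩ : ∃ k, m = k + 1 := ⟨m - 1, by omega⟩
  simp only [Nat.add_sub_cancel]
  rw [div_pow, inv_pow]
  field_simp
  ring

lemma aux_subst (m : ℕ) (hm : 1 ≤ m) (T : ℝ) (hT0 : 0 ≤ T) (hT1 : T < 1) :
    ∫ ρ in Set.Ioi 0 ∩ {ρ : ℝ | T ^ 2 * (1 + ρ ^ 2) ≤ 1},
      ρ ^ (m - 1) * (√(1 + ρ ^ 2))⁻¹ ^ (m + 1) =
    1 / 2 * ∫ s in (0:ℝ)..(1 - T ^ 2), s ^ ((m : ℝ) / 2 - 1) * (1 - s) ^ ((1 : ℝ) / 2 - 1) := by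
  have hms : MeasurableSet (Set.Ioi 0 ∩ {ρ : ℝ | T ^ 2 * (1 + ρ ^ 2) ≤ 1}) :=
    measurableSet_Ioi.inter (measurableSet_le (by fun_prop) (by fun_prop))
  have himg : (fun ρ : ℝ => ρ ^ 2 / (1 + ρ ^ 2)) '' (Set.Ioi 0 ∩ {ρ : ℝ | T ^ 2 * (1 + ρ ^ 2) ≤ 1})
      = Set.Ioo 0 1 ∩ Set.Iic (1 - T ^ 2) := by
    ext s
    constructor
    · rintro ⟨ρ, ⟨h1, h2⟩, rfl⟩
      have h1 : 0 < ρ := h1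
      have h2 : T ^ 2 * (1 + ρ ^ 2) ≤ 1 := h2
      have h0 : 0 < 1 + ρ ^ 2 := by positivity
      refine ⟨⟨by positivity, ?_⟩, ?_⟩
      · show ρ ^ 2 / (1 + ρ ^ 2) < 1
        rw [div_lt_one h0]; linarith
      · show ρ ^ 2 / (1 + ρ ^ 2) ≤ 1 - T ^ 2
        rw [div_le_iff₀ h0]; nlinarith
    · rintro ⟨⟨h1, h2⟩, h3⟩
      have h3 : s ≤ 1 - T ^ 2 := h3
      have h4 : 0 < 1 - s := by linarith
      have h5 : √(s / (1 - s)) ^ 2 = s / (1 - s) := Real.sq_sqrt (by positivity)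
      have h6 : 1 + s / (1 - s) = 1 / (1 - s) := by field_simp; ring
      refine ⟨√(s / (1 - s)), ⟨Real.sqrt_pos.mpr (by positivity), ?_⟩, ?_⟩
      · show T ^ 2 * (1 + √(s / (1 - s)) ^ 2) ≤ 1
        rw [h5, h6, mul_one_div, div_le_one h4]; linarith
      · show √(s / (1 - s)) ^ 2 / (1 + √(s / (1 - s)) ^ 2) = s
        rw [h5, h6]; field_simp
  have hinj : Set.InjOn (fun ρ : ℝ => ρ ^ 2 / (1 + ρ ^ 2))
      (Set.Ioi 0 ∩ {ρ : ℝ | T ^ 2 * (1 + ρ ^ 2) ≤ 1}) := by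
    intro a ha b hb hab
    have ha : 0 < a := ha.1
    have hb : 0 < b := hb.1
    have hab : a ^ 2 / (1 + a ^ 2) = b ^ 2 / (1 + b ^ 2) := hab
    rw [div_eq_div_iff (by positivity) (by positivity)] at hab
    exact (sq_eq_sq₀ ha.le hb.le).mp (by linarith)
  have hder : ∀ ρ ∈ (Set.Ioi 0 ∩ {ρ : ℝ | T ^ 2 * (1 + ρ ^ 2) ≤ 1}),
      HasDerivWithinAt (fun ρ : ℝ => ρ ^ 2 / (1 + ρ ^ 2)) (2 * ρ / (1 + ρ ^ 2) ^ 2)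
      (Set.Ioi 0 ∩ {ρ : ℝ | T ^ 2 * (1 + ρ ^ 2) ≤ 1}) ρ := by
    intro ρ _
    have h1 : HasDerivAt (fun ρ : ℝ => ρ ^ 2) (2 * ρ) ρ := by simpa using hasDerivAt_pow 2 ρ
    have h2 := h1.fun_div (h1.const_add 1) (by positivity)
    refine (h2.congr_deriv ?_).hasDerivWithinAt
    congr 1; ring
  have hcv := integral_image_eq_integral_abs_deriv_smul hms hder hinj
    (fun s => s ^ ((m : ℝ) / 2 - 1) * (1 - s) ^ ((1 : ℝ) / 2 - 1))
  rw [setIntegral_congr_fun hms (fun ρ hρ => aux_integrand m hm ρ hρ.1), himg,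
    integral_const_mul] at hcv
  have hae : (Set.Ioo 0 1 ∩ Set.Iic (1 - T ^ 2) : Set ℝ) =ᵐ[volume] Set.Ioc 0 (1 - T ^ 2) := by
    have : ∀ᵐ s : ℝ, s ≠ 1 := compl_mem_ae_iff.mpr (measure_singleton (1 : ℝ))
    filter_upwards [this] with s hs
    apply propext
    show ((0 < s ∧ s < 1) ∧ s ≤ 1 - T ^ 2) ↔ (0 < s ∧ s ≤ 1 - T ^ 2)
    constructor
    · rintro ⟨⟨h1, _⟩, h3⟩; exact ⟨h1, h3⟩
    · rintro ⟨h1, h3⟩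
      exact ⟨⟨h1, lt_of_le_of_ne (by nlinarith [sq_nonneg T]) hs⟩, h3⟩
  rw [intervalIntegral.integral_of_le (by nlinarith), ← setIntegral_congr_set hae, hcv]
  ring

lemma aux_beta (a b : ℝ) (ha : 0 < a) (hb : 0 < b) :
    realBeta a b = ∫ s in (0:ℝ)..1, s ^ (a - 1) * (1 - s) ^ (b - 1) := by
  have h := ProbabilityTheory.beta_eq_betaIntegralReal a b ha hb
  rw [show realBeta a b = ProbabilityTheory.beta a b from rfl, h, Complex.betaIntegral,
    ← Complex.ofReal_re (∫ s in (0:ℝ)..1, s ^ (a - 1) * (1 - s) ^ (b - 1)),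
    ← intervalIntegral.integral_ofReal]
  congr 1
  refine intervalIntegral.integral_congr fun s hs => ?_
  rw [Set.uIcc_of_le zero_le_one] at hs
  have h1 : 0 ≤ 1 - s := by linarith [hs.2]
  push_cast
  rw [Complex.ofReal_cpow hs.1, Complex.ofReal_cpow h1]
  push_cast
  rfl

lemma aux_isom (m : ℕ) (e : EuclideanSpace ℝ (Fin (m + 1))) (he : ‖e‖ = 1) :
    ∃ L : WithLp 2 (ℝ × EuclideanSpace ℝ (Fin m)) ≃ₗᵢ[ℝ] EuclideanSpace ℝ (Fin (m + 1)),
      L (WithLp.toLp 2 (1, 0)) = e := by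
  have hfr : Module.finrank ℝ (WithLp 2 (ℝ × EuclideanSpace ℝ (Fin m))) = m + 1 := by
    rw [(WithLp.linearEquiv 2 ℝ (ℝ × EuclideanSpace ℝ (Fin m))).finrank_eq]
    simp [add_comm]
  let L0 := ((stdOrthonormalBasis ℝ (WithLp 2 (ℝ × EuclideanSpace ℝ (Fin m)))).reindex
    (finCongr hfr)).repr
  have hn : ‖L0 (WithLp.toLp 2 (1, 0))‖ = ‖e‖ := by
    rw [L0.norm_map, he]
    have := WithLp.prod_norm_sq_eq_of_L2 (WithLp.toLp 2 ((1 : ℝ), (0 : EuclideanSpace ℝ (Fin m))))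
    simp at this
    simp
  refine ⟨L0.trans (Submodule.reflection (ℝ ∙ (L0 (WithLp.toLp 2 (1, 0)) - e))ᗮ), ?_⟩
  exact Submodule.reflection_sub hn

lemma aux_vol (m : ℕ) (e : EuclideanSpace ℝ (Fin (m + 1))) (he : ‖e‖ = 1) (T : ℝ) :
    volume {u : EuclideanSpace ℝ (Fin (m + 1)) | ‖u‖ ^ 2 < 1 ∧ T ^ 2 * ‖u‖ ^ 2 ≤ ⟪u, e⟫ ^ 2} =
    volume {q : ℝ × EuclideanSpace ℝ (Fin m) | q.1 ^ 2 + ‖q.2‖ ^ 2 < 1 ∧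
      T ^ 2 * (q.1 ^ 2 + ‖q.2‖ ^ 2) ≤ q.1 ^ 2} := by
  obtain ⟨L, hL⟩ := aux_isom m e he
  have hmp := L.measurePreserving.comp
    (WithLp.volume_preserving_toLp ℝ (EuclideanSpace ℝ (Fin m)))
  have hms : MeasurableSet {u : EuclideanSpace ℝ (Fin (m + 1)) |
      ‖u‖ ^ 2 < 1 ∧ T ^ 2 * ‖u‖ ^ 2 ≤ ⟪u, e⟫ ^ 2} := by
    exact MeasurableSet.inter (s₁ := {u : EuclideanSpace ℝ (Fin (m + 1)) | ‖u‖ ^ 2 < 1})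
      (s₂ := {u | T ^ 2 * ‖u‖ ^ 2 ≤ ⟪u, e⟫ ^ 2})
      (measurableSet_lt (by fun_prop) (by fun_prop)) (measurableSet_le (by fun_prop) (by fun_prop))
  rw [← hmp.measure_preimage hms.nullMeasurableSet]
  congr 1
  ext q
  have h1 : ‖L (WithLp.toLp 2 q)‖ ^ 2 = q.1 ^ 2 + ‖q.2‖ ^ 2 := by
    rw [L.norm_map, WithLp.prod_norm_sq_eq_of_L2]; simp
  have h2 : ⟪L (WithLp.toLp 2 q), e⟫ = q.1 := by
    rw [← hL, L.inner_map_map, WithLp.prod_inner_apply]; simp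
  show ‖L (WithLp.toLp 2 q)‖ ^ 2 < 1 ∧ T ^ 2 * ‖L (WithLp.toLp 2 q)‖ ^ 2 ≤
    ⟪L (WithLp.toLp 2 q), e⟫ ^ 2 ↔ _
  rw [h1, h2]
  rfl

open scoped Pointwise in
lemma aux_sphere (m : ℕ) (hm : 1 ≤ m) (e : EuclideanSpace ℝ (Fin (m + 1))) (he : ‖e‖ = 1)
    (T : ℝ) (hT0 : 0 ≤ T) (hT1 : T < 1) :
    uniformSphere (m + 1) {w | T ≤ |⟪(w : EuclideanSpace ℝ (Fin (m + 1))), e⟫|} =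
      ENNReal.ofReal (regIncBeta (1 - T ^ 2) ((m : ℝ) / 2) (1 / 2)) := by
  have hms : MeasurableSet {w : Metric.sphere (0 : EuclideanSpace ℝ (Fin (m + 1))) 1 |
      T ≤ |⟪(w : EuclideanSpace ℝ (Fin (m + 1))), e⟫|} := by
    apply IsClosed.measurableSet
    exact isClosed_le (by fun_prop) (by fun_prop)
  have hset : Set.Ioo (0 : ℝ) 1 • (Subtype.val '' {w : Metric.sphere
      (0 : EuclideanSpace ℝ (Fin (m + 1))) 1 |
      T ≤ |⟪(w : EuclideanSpace ℝ (Fin (m + 1))), e⟫|}) =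
      {u : EuclideanSpace ℝ (Fin (m + 1)) | ‖u‖ ^ 2 < 1 ∧ T ^ 2 * ‖u‖ ^ 2 ≤ ⟪u, e⟫ ^ 2} \ {0} := by
    ext u
    rw [Set.mem_smul]
    constructor
    · rintro ⟨s, ⟨hs0, hs1⟩, _, ⟨w, hw, rfl⟩, rfl⟩
      have hw : T ≤ |⟪(w : EuclideanSpace ℝ (Fin (m + 1))), e⟫| := hw
      have hw1 : ‖(w : EuclideanSpace ℝ (Fin (m + 1)))‖ = 1 := by simpa using w.2
      have hn : ‖s • (w : EuclideanSpace ℝ (Fin (m + 1)))‖ = s := by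
        rw [norm_smul, hw1, Real.norm_of_nonneg hs0.le, mul_one]
      refine ⟨⟨?_, ?_⟩, ?_⟩
      · rw [hn]; nlinarith
      · rw [hn, real_inner_smul_left, mul_pow, mul_comm]
        have : T ^ 2 ≤ ⟪(w : EuclideanSpace ℝ (Fin (m + 1))), e⟫ ^ 2 := by
          rw [← sq_abs ⟪(w : EuclideanSpace ℝ (Fin (m + 1))), e⟫]
          exact pow_le_pow_left₀ hT0 hw 2
        gcongr
      · intro h
        have h : s • (w : EuclideanSpace ℝ (Fin (m + 1))) = 0 := h
        rw [h, norm_zero] at hn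
        linarith
    · rintro ⟨⟨h1, h2⟩, h3⟩
      have h3 : u ≠ 0 := h3
      have hp : 0 < ‖u‖ := norm_pos_iff.mpr h3
      refine ⟨‖u‖, ⟨hp, by nlinarith⟩, ‖u‖⁻¹ • u, ⟨⟨‖u‖⁻¹ • u, ?_⟩, ?_, rfl⟩, ?_⟩
      · simp [norm_smul, hp.ne']
      · show T ≤ |⟪‖u‖⁻¹ • u, e⟫|
        rw [real_inner_smul_left, abs_mul, abs_of_pos (inv_pos.mpr hp), inv_mul_eq_div,
          le_div_iff₀ hp]
        refine (sq_le_sq₀ (by positivity) (abs_nonneg _)).mp ?_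
        rw [sq_abs, mul_pow]; exact h2
      · simp [smul_smul, hp.ne']
  have hball : ball (0 : EuclideanSpace ℝ (Fin (m + 1))) 1 =
      {u : EuclideanSpace ℝ (Fin (m + 1)) | ‖u‖ ^ 2 < 1 ∧ (0 : ℝ) ^ 2 * ‖u‖ ^ 2 ≤ ⟪u, e⟫ ^ 2} := by
    ext u
    rw [mem_ball_zero_iff]
    show _ ↔ ‖u‖ ^ 2 < 1 ∧ (0 : ℝ) ^ 2 * ‖u‖ ^ 2 ≤ ⟪u, e⟫ ^ 2
    constructor
    · intro h
      exact ⟨by nlinarith [norm_nonneg u], by simp; positivity⟩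
    · rintro ⟨h, -⟩
      nlinarith [norm_nonneg u]
  set S : ENNReal := volume {u : EuclideanSpace ℝ (Fin (m + 1)) |
    ‖u‖ ^ 2 < 1 ∧ T ^ 2 * ‖u‖ ^ 2 ≤ ⟪u, e⟫ ^ 2} with hS
  set V : ENNReal := volume (ball (0 : EuclideanSpace ℝ (Fin (m + 1))) 1) with hV
  have hV0 : V ≠ 0 := (measure_ball_pos _ _ one_pos).ne'
  have hVt : V ≠ ⊤ := measure_ball_lt_top.ne
  have hSt : S ≠ ⊤ := by
    refine ne_top_of_le_ne_top hVt (measure_mono ?_)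
    intro u hu
    have h : ‖u‖ ^ 2 < 1 := hu.1
    rw [mem_ball_zero_iff]
    nlinarith [norm_nonneg u]
  have hSr := aux_real m hm T
  rw [← aux_vol m e he T, aux_subst m hm T hT0 hT1, ← hS] at hSr
  have hVr := aux_real m hm 0
  rw [← aux_vol m e he 0, aux_subst m hm 0 le_rfl one_pos, ← hball, ← hV] at hVr
  have hm0 : (0 : ℝ) < m := by exact_mod_cast hm
  have hb := aux_beta ((m : ℝ) / 2) (1 / 2) (by positivity) (by positivity)
  rw [show (1 : ℝ) - 0 ^ 2 = 1 by norm_num, ← hb] at hVr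
  have hVpos : 0 < V.toReal := ENNReal.toReal_pos hV0 hVt
  rw [uniformSphere, Measure.smul_apply, smul_eq_mul, Measure.toSphere_apply_univ,
    Measure.toSphere_apply' _ hms, hset, measure_sdiff_null (measure_singleton _), ← hS, ← hV,
    ← mul_comm, ← div_eq_mul_inv, ENNReal.mul_div_mul_left _ _ (by simp) (by simp),
    ← ENNReal.ofReal_toReal hSt, ← ENNReal.ofReal_toReal hVt, ← ENNReal.ofReal_div_of_pos hVpos]
  congr 1
  rw [regIncBeta, hSr, hVr]
  rw [hVr] at hVpos
  have h1 := left_ne_zero_of_mul hVpos.ne'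
  rw [mul_div_mul_left _ _ h1, mul_div_mul_left _ _ (by norm_num)]

lemma aux_pos {n : ℕ} (w c : EuclideanSpace ℝ (Fin n)) (hw : ‖w‖ = 1) (b r : ℝ) (hr : 0 < r) :
    (∀ u ∈ ball c r, 0 < ⟪w, u⟫ - b) ↔ r ≤ ⟪w, c⟫ - b := by
  constructor
  · intro h
    by_contra! hlt
    set s := max 0 (⟪w, c⟫ - b)
    have hs0 : 0 ≤ s := le_max_left _ _
    have hs1 : ⟪w, c⟫ - b ≤ s := le_max_right _ _
    have hs : s < r := max_lt hr hlt
    have := h (c - s • w) (by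
      rw [mem_ball, dist_eq_norm, sub_sub_cancel_left, norm_neg, norm_smul, hw,
        Real.norm_of_nonneg hs0]; linarith)
    rw [inner_sub_right, real_inner_smul_right, real_inner_self_eq_norm_sq, hw] at this
    linarith
  · intro h u hu
    rw [mem_ball, dist_eq_norm] at hu
    have h1 := abs_real_inner_le_norm w (u - c)
    rw [hw, one_mul, inner_sub_right] at h1
    linarith [neg_le_of_abs_le h1]

lemma aux_neg {n : ℕ} (w c : EuclideanSpace ℝ (Fin n)) (hw : ‖w‖ = 1) (b r : ℝ) (hr : 0 < r) :
    (∀ u ∈ ball c r, ⟪w, u⟫ - b < 0) ↔ r ≤ b - ⟪w, c⟫ := by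
  have h := aux_pos (-w) c (by rwa [norm_neg]) (-b) r hr
  simp only [inner_neg_left] at h
  rw [show b - ⟪w, c⟫ = -⟪w, c⟫ - -b by ring, ← h]
  refine forall₂_congr fun u _ => ?_
  constructor <;> intro h <;> linarith

theorem stmt8 (n : ℕ) (hn : 2 ≤ n) (c x : EuclideanSpace ℝ (Fin n)) (r p δ : ℝ)
    (hr : 0 < r) (hp : 0 < p) (hδ : 0 < δ) (hdist : ‖c - x‖ = p + r + δ)
    (Q : ℝ) (hQ : Q = 1 - ((p + r) / (p + r + δ)) ^ 2)
    (v : EuclideanSpace ℝ (Fin n))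
    (hv : v = (p / (p + r)) • c + (r / (p + r)) • x) :
    uniformSphere n {w : Metric.sphere (0 : EuclideanSpace ℝ (Fin n)) 1 |
        ∃ b : ℝ, Separates (w : EuclideanSpace ℝ (Fin n)) b c r x p} =
      ENNReal.ofReal (regIncBeta Q (((n : ℝ) - 1) / 2) (1 / 2)) ∧
    uniformSphere n {w : Metric.sphere (0 : EuclideanSpace ℝ (Fin n)) 1 |
        Separates (w : EuclideanSpace ℝ (Fin n)) ⟪(w : EuclideanSpace ℝ (Fin n)), v⟫ c r x p} =
      ENNReal.ofReal (regIncBeta Q (((n : ℝ) - 1) / 2) (1 / 2)) := by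
  obtain ⟨m, rfl⟩ : ∃ m, n = m + 1 := ⟨n - 1, by omega⟩
  have hm : 1 ≤ m := by omega
  have hd : 0 < p + r + δ := by positivity
  have hpr : 0 < p + r := by positivity
  set T := (p + r) / (p + r + δ) with hT
  have hT0 : 0 ≤ T := by positivity
  have hT1 : T < 1 := by rw [hT, div_lt_one hd]; linarith
  set e := (p + r + δ)⁻¹ • (c - x) with hE
  have he : ‖e‖ = 1 := by
    rw [hE, norm_smul, hdist, Real.norm_of_nonneg (by positivity), inv_mul_cancel₀ hd.ne']
  have key := aux_sphere m hm e he T hT0 hT1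
  have hTe : ∀ w : EuclideanSpace ℝ (Fin (m + 1)),
      T ≤ |⟪w, e⟫| ↔ p + r ≤ |⟪w, c⟫ - ⟪w, x⟫| := by
    intro w
    rw [hE, real_inner_smul_right, inner_sub_right, abs_mul, abs_of_pos (inv_pos.mpr hd),
      inv_mul_eq_div, hT, div_le_div_iff_of_pos_right hd]
  have hcast : (((m + 1 : ℕ) : ℝ) - 1) / 2 = (m : ℝ) / 2 := by push_cast; ring
  rw [hcast, hQ]
  have hA : {w : Metric.sphere (0 : EuclideanSpace ℝ (Fin (m + 1))) 1 |
        ∃ b : ℝ, Separates (w : EuclideanSpace ℝ (Fin (m + 1))) b c r x p} =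
      {w : Metric.sphere (0 : EuclideanSpace ℝ (Fin (m + 1))) 1 |
        T ≤ |⟪(w : EuclideanSpace ℝ (Fin (m + 1))), e⟫|} := by
    ext w
    have hw : ‖(w : EuclideanSpace ℝ (Fin (m + 1)))‖ = 1 := by simpa using w.2
    show (∃ b : ℝ, Separates (w : EuclideanSpace ℝ (Fin (m + 1))) b c r x p) ↔ T ≤ _
    rw [hTe, le_abs]
    simp only [Separates, aux_pos _ _ hw _ _ hr, aux_neg _ _ hw _ _ hr, aux_pos _ _ hw _ _ hp,
      aux_neg _ _ hw _ _ hp]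
    constructor
    · rintro ⟨b, h | h⟩
      · left; linarith [h.1, h.2]
      · right; linarith [h.1, h.2]
    · rintro (h | h)
      · exact ⟨⟪(w : EuclideanSpace ℝ (Fin (m + 1))), c⟫ - r, Or.inl ⟨by linarith, by linarith⟩⟩
      · exact ⟨⟪(w : EuclideanSpace ℝ (Fin (m + 1))), c⟫ + r, Or.inr ⟨by linarith, by linarith⟩⟩
  have hB : {w : Metric.sphere (0 : EuclideanSpace ℝ (Fin (m + 1))) 1 |
        Separates (w : EuclideanSpace ℝ (Fin (m + 1)))
          ⟪(w : EuclideanSpace ℝ (Fin (m + 1))), v⟫ c r x p} =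
      {w : Metric.sphere (0 : EuclideanSpace ℝ (Fin (m + 1))) 1 |
        T ≤ |⟪(w : EuclideanSpace ℝ (Fin (m + 1))), e⟫|} := by
    ext w
    have hw : ‖(w : EuclideanSpace ℝ (Fin (m + 1)))‖ = 1 := by simpa using w.2
    show Separates (w : EuclideanSpace ℝ (Fin (m + 1)))
      ⟪(w : EuclideanSpace ℝ (Fin (m + 1))), v⟫ c r x p ↔ T ≤ _
    rw [hTe, le_abs]
    simp only [Separates, aux_pos _ _ hw _ _ hr, aux_neg _ _ hw _ _ hr, aux_pos _ _ hw _ _ hp,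
      aux_neg _ _ hw _ _ hp]
    rw [hv, inner_add_right, real_inner_smul_right, real_inner_smul_right]
    generalize ⟪(w : EuclideanSpace ℝ (Fin (m + 1))), c⟫ = C
    generalize ⟪(w : EuclideanSpace ℝ (Fin (m + 1))), x⟫ = X
    have e1 : C - (p / (p + r) * C + r / (p + r) * X) = r * ((C - X) / (p + r)) := by
      field_simp; ring
    have e2 : (p / (p + r) * C + r / (p + r) * X) - X = p * ((C - X) / (p + r)) := by
      field_simp; ring
    have e3 : (p / (p + r) * C + r / (p + r) * X) - C = r * (-(C - X) / (p + r)) := by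
      field_simp; ring
    have e4 : X - (p / (p + r) * C + r / (p + r) * X) = p * (-(C - X) / (p + r)) := by
      field_simp; ring
    rw [e1, e2, e3, e4, le_mul_iff_one_le_right hr, le_mul_iff_one_le_right hp,
      le_mul_iff_one_le_right hr, le_mul_iff_one_le_right hp, and_self, and_self,
      one_le_div hpr, one_le_div hpr]
  rw [hA, hB]
  exact ⟨key, key⟩
end

section
/- Let n ≥ 2, let c, x ∈ ℝⁿ and r, p > 0 with |c − x| > p + r, let k ≥ max(|c|, |x|) > 0, and let w ∈ ℝⁿ with |w| = 1. Then the Lebesgue measure of the set {b ∈ [−k, k] : H[w;b] separates B[c,r] and B[x,p]} equals max(|⟪w, c − x⟫| − (p + r), 0); in particular, when it is nonempty this set is an interval entirely contained in [−k, k]. -/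
open MeasureTheory Metric Real
open scoped RealInnerProductSpace

theorem pos_iff_aux {n : ℕ} (w c : EuclideanSpace ℝ (Fin n)) (b r : ℝ) (hr : 0 < r)
    (hw : ‖w‖ = 1) : (∀ u ∈ ball c r, 0 < ⟪w, u⟫ - b) ↔ b ≤ ⟪w, c⟫ - r := by
  constructor
  · intro h
    by_contra! hb
    have ht : max 0 (⟪w, c⟫ - b) < r := max_lt hr (by linarith)
    have h1 := h (c - (max 0 (⟪w, c⟫ - b)) • w) (by
      rw [mem_ball, dist_eq_norm, sub_sub_cancel_left, norm_neg, norm_smul, hw, mul_one,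
        Real.norm_eq_abs, abs_of_nonneg (le_max_left _ _)]
      exact ht)
    rw [inner_sub_right, inner_smul_right, real_inner_self_eq_norm_sq, hw] at h1
    have := le_max_right 0 (⟪w, c⟫ - b)
    linarith
  · intro h u hu
    rw [mem_ball, dist_eq_norm] at hu
    have h1 := abs_real_inner_le_norm w (u - c)
    rw [hw, one_mul, inner_sub_right] at h1
    have h2 := (abs_le.mp h1).1
    linarith

theorem neg_iff_aux {n : ℕ} (w c : EuclideanSpace ℝ (Fin n)) (b r : ℝ) (hr : 0 < r)
    (hw : ‖w‖ = 1) : (∀ u ∈ ball c r, ⟪w, u⟫ - b < 0) ↔ ⟪w, c⟫ + r ≤ b := by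
  have h := pos_iff_aux (-w) c (-b) r hr (by rwa [norm_neg])
  simp only [inner_neg_left] at h
  constructor
  · intro h1
    have := h.1 (fun u hu => by linarith [h1 u hu])
    linarith
  · intro h1 u hu
    have := h.2 (by linarith) u hu
    linarith

theorem stmt9 (n : ℕ) (hn : 2 ≤ n) (c x : EuclideanSpace ℝ (Fin n)) (r p k : ℝ)
    (hr : 0 < r) (hp : 0 < p) (hdist : p + r < ‖c - x‖)
    (hk : max ‖c‖ ‖x‖ ≤ k) (hk0 : 0 < max ‖c‖ ‖x‖)
    (w : EuclideanSpace ℝ (Fin n)) (hw : ‖w‖ = 1) :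
    volume {b : ℝ | b ∈ Set.Icc (-k) k ∧ Separates w b c r x p} =
      ENNReal.ofReal (max (|⟪w, c - x⟫| - (p + r)) 0) ∧
    ({b : ℝ | Separates w b c r x p}.Nonempty →
      {b : ℝ | Separates w b c r x p} ⊆ Set.Icc (-k) k ∧
      {b : ℝ | Separates w b c r x p}.OrdConnected) := by
  have hc := abs_real_inner_le_norm w c
  have hx := abs_real_inner_le_norm w x
  rw [hw, one_mul] at hc hx
  obtain ⟨hc1, hc2⟩ := abs_le.mp (hc.trans ((le_max_left _ _).trans hk))
  obtain ⟨hx1, hx2⟩ := abs_le.mp (hx.trans ((le_max_right _ _).trans hk))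
  have hS : ∀ b, Separates w b c r x p ↔
      ((b ≤ ⟪w, c⟫ - r ∧ ⟪w, x⟫ + p ≤ b) ∨ (⟪w, c⟫ + r ≤ b ∧ b ≤ ⟪w, x⟫ - p)) := by
    intro b
    unfold Separates
    rw [pos_iff_aux w c b r hr hw, neg_iff_aux w x b p hp hw, neg_iff_aux w c b r hr hw,
      pos_iff_aux w x b p hp hw]
  have key : ∃ l m : ℝ, {b : ℝ | Separates w b c r x p} = Set.Icc l m ∧
      m - l = |⟪w, c - x⟫| - (p + r) ∧ -k ≤ l ∧ m ≤ k := by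
    rw [inner_sub_right]
    rcases le_total ⟪w, x⟫ ⟪w, c⟫ with h | h
    · refine ⟨⟪w, x⟫ + p, ⟪w, c⟫ - r, ?_, ?_, by linarith, by linarith⟩
      · ext b
        simp only [Set.mem_setOf_eq, hS, Set.mem_Icc]
        constructor
        · rintro (h | h)
          · exact ⟨h.2, h.1⟩
          · linarith
        · exact fun h => Or.inl ⟨h.2, h.1⟩
      · rw [abs_of_nonneg (by linarith)]; ring
    · refine ⟨⟪w, c⟫ + r, ⟪w, x⟫ - p, ?_, ?_, by linarith, by linarith⟩
      · ext b
        simp only [Set.mem_setOf_eq, hS, Set.mem_Icc]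
        constructor
        · rintro (h | h)
          · linarith
          · exact h
        · exact fun h => Or.inr h
      · rw [abs_of_nonpos (by linarith)]; ring
  obtain ⟨l, m, hE, hlen, hl, hm⟩ := key
  have hsub : {b : ℝ | Separates w b c r x p} ⊆ Set.Icc (-k) k := by
    rw [hE]; exact Set.Icc_subset_Icc hl hm
  refine ⟨?_, fun _ => ⟨hsub, by rw [hE]; exact Set.ordConnected_Icc⟩⟩
  have hE2 : {b : ℝ | b ∈ Set.Icc (-k) k ∧ Separates w b c r x p} = Set.Icc l m := by
    rw [← hE]
    ext b
    exact ⟨fun h => h.2, fun h => ⟨hsub h, h⟩⟩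
  rw [hE2, Real.volume_Icc, hlen]
  rw [ENNReal.ofReal_max, ENNReal.ofReal_zero]
  simp
end

section
/- Let n ≥ 2, let c, x ∈ ℝⁿ and r, p > 0 with |c − x| = p + r + δ for some δ > 0, let k ≥ max(|c|, |x|) > 0, let 𝔴 be uniformly distributed on the unit sphere S^{n−1} ⊂ ℝⁿ, let 𝔟 be independently uniformly distributed on [−k, k], and set 𝒬 = 1 − ((p+r)/(p+r+δ))². Then the probability that H[𝔴;𝔟] separates B[c,r] and B[x,p] equals (|c − x|/(2k)) · ( 𝒬^{(n−1)/2} / ( ((n−1)/2) · B((n−1)/2, 1/2) ) − ((p+r)/(p+r+δ)) · I(𝒬; (n−1)/2, 1/2) ). -/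
open MeasureTheory Metric Real
open scoped RealInnerProductSpace

theorem polar_lintegral {E : Type*} [NormedAddCommGroup E] [NormedSpace ℝ E] [MeasurableSpace E]
    [BorelSpace E] [FiniteDimensional ℝ E] [Nontrivial E] (μ : Measure E) [μ.IsAddHaarMeasure]
    (F : E → ENNReal) (hF : Measurable F) :
    ∫⁻ y, F y ∂μ = ∫⁻ w : sphere (0 : E) 1, (∫⁻ r in Set.Ioi (0:ℝ),
      ENNReal.ofReal (r ^ (Module.finrank ℝ E - 1)) * F (r • (w : E))) ∂μ.toSphere := by
  calc
    ∫⁻ y, F y ∂μ = ∫⁻ x : ({(0)}ᶜ : Set E), F x.1 ∂(μ.comap (↑)) := by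
      rw [lintegral_subtype_comap (measurableSet_singleton _).compl F,
        restrict_compl_singleton]
    _ = ∫⁻ x, F (x.2.1 • x.1.1) ∂μ.toSphere.prod (.volumeIoiPow (Module.finrank ℝ E - 1)) := by
      rw [← μ.measurePreserving_homeomorphUnitSphereProd.lintegral_comp_emb
        (Homeomorph.measurableEmbedding _)]
      refine lintegral_congr fun x => ?_
      have : ‖x.1‖ ≠ 0 := norm_ne_zero_iff.2 x.2
      simp [smul_smul, this]
    _ = _ := by
      rw [lintegral_prod _ (by fun_prop)]
      refine lintegral_congr fun w => ?_
      rw [Measure.volumeIoiPow, lintegral_withDensity_eq_lintegral_mul _ (by fun_prop) (by fun_prop)]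
      rw [← lintegral_subtype_comap measurableSet_Ioi]
      rfl

theorem polar_radial {E : Type*} [NormedAddCommGroup E] [NormedSpace ℝ E] [MeasurableSpace E]
    [BorelSpace E] [FiniteDimensional ℝ E] [Nontrivial E] (μ : Measure E) [μ.IsAddHaarMeasure]
    (F : ℝ → ENNReal) (hF : Measurable F) :
    ∫⁻ y, F ‖y‖ ∂μ = μ.toSphere Set.univ * ∫⁻ r in Set.Ioi (0:ℝ),
      ENNReal.ofReal (r ^ (Module.finrank ℝ E - 1)) * F r := by
  rw [polar_lintegral μ _ (by fun_prop)]
  rw [mul_comm, ← lintegral_const]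
  refine lintegral_congr fun w => ?_
  refine setLIntegral_congr_fun measurableSet_Ioi fun r hr => ?_
  have hr : 0 < r := hr
  simp [norm_smul, abs_of_pos hr]

theorem split_lintegral {E : Type*} [NormedAddCommGroup E] [InnerProductSpace ℝ E]
    [MeasurableSpace E] [BorelSpace E] [FiniteDimensional ℝ E] (n : ℕ)
    (hn : Module.finrank ℝ E = n + 2) (v : E) (hv : ‖v‖ = 1)
    (G : ℝ → ℝ → ENNReal) (hG : Measurable (Function.uncurry G)) :
    ∫⁻ y : E, G ⟪v, y⟫ ‖y‖ = 
      (volume : Measure (ℝ ∙ v)ᗮ).toSphere Set.univ * ∫⁻ s : ℝ, ∫⁻ ρ in Set.Ioi (0:ℝ),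
        ENNReal.ofReal (ρ ^ n) * G s √(s ^ 2 + ρ ^ 2) := by
  have hv0 : v ≠ 0 := by rintro rfl; simp at hv
  have hfr : Module.finrank ℝ (ℝ ∙ v)ᗮ = n + 1 := by
    have := Submodule.finrank_add_finrank_orthogonal (ℝ ∙ v)
    rw [finrank_span_singleton hv0] at this
    omega
  have : Nontrivial (ℝ ∙ v)ᗮ := Module.nontrivial_of_finrank_pos (R := ℝ) (by omega)
  let e1 := (ℝ ∙ v).orthogonalDecomposition
  have m1 := e1.symm.measurePreserving
  rw [← m1.lintegral_comp_emb e1.symm.toHomeomorph.measurableEmbedding]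
  rw [← (WithLp.volume_preserving_toLp _ _).lintegral_comp_emb
    (MeasurableEquiv.toLp 2 _).measurableEmbedding]
  rw [Measure.volume_eq_prod, lintegral_prod _ (by fun_prop)]
  let e2 := LinearIsometryEquiv.toSpanUnitSingleton (𝕜 := ℝ) v hv
  rw [← e2.measurePreserving.lintegral_comp_emb e2.toHomeomorph.measurableEmbedding]
  have key : ∀ (s : ℝ) (z : (ℝ ∙ v)ᗮ), 
      G ⟪v, e1.symm (WithLp.toLp 2 (e2 s, z))⟫ ‖e1.symm (WithLp.toLp 2 (e2 s, z))‖ = 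
      G s √(s ^ 2 + ‖z‖ ^ 2) := by
    intro s z
    congr 1
    · have : e1.symm (WithLp.toLp 2 (e2 s, z)) = s • v + (z : E) := by
        simp [e1, e2]
      rw [this, inner_add_right, inner_smul_right, real_inner_self_eq_norm_sq, hv,
        Submodule.mem_orthogonal_singleton_iff_inner_right.1 z.2]
      simp
    · rw [LinearIsometryEquiv.norm_map, WithLp.prod_norm_eq_of_L2]
      simp
  simp only [key]
  rw [← lintegral_const_mul]
  · refine lintegral_congr fun s => ?_
    rw [polar_radial volume (fun ρ => G s √(s ^ 2 + ρ ^ 2)) (by fun_prop), hfr]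
    simp
  · refine Measurable.lintegral_prod_right' (f := fun q : ℝ × ℝ =>
      ENNReal.ofReal (q.2 ^ n) * G q.1 √(q.1 ^ 2 + q.2 ^ 2)) ?_
    have : Measurable fun q : ℝ × ℝ => Function.uncurry G (q.1, √(q.1 ^ 2 + q.2 ^ 2)) := by
      fun_prop
    exact Measurable.mul (by fun_prop) this

theorem planar_lintegral (n : ℕ) (f h : ℝ → ENNReal) (hf : Measurable f) (hh : Measurable h) :
    ∫⁻ s : ℝ, ∫⁻ ρ in Set.Ioi (0:ℝ), ENNReal.ofReal (ρ ^ n) *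
      (f (s / √(s ^ 2 + ρ ^ 2)) * h √(s ^ 2 + ρ ^ 2)) =
    (∫⁻ r in Set.Ioi (0:ℝ), ENNReal.ofReal (r ^ (n + 1)) * h r) *
      ∫⁻ θ in Set.Ioo 0 π, ENNReal.ofReal (sin θ ^ n) * f (cos θ) := by
  set g : ℝ × ℝ → ENNReal := fun q => ENNReal.ofReal (q.2 ^ n) *
      (f (q.1 / √(q.1 ^ 2 + q.2 ^ 2)) * h √(q.1 ^ 2 + q.2 ^ 2)) with hg
  have hgm : Measurable g := by fun_prop
  have hS : MeasurableSet {q : ℝ × ℝ | 0 < q.2} := measurableSet_lt measurable_const measurable_snd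
  have e1 : ∫⁻ s : ℝ, ∫⁻ ρ in Set.Ioi (0:ℝ), g (s, ρ) =
      ∫⁻ q : ℝ × ℝ, Set.indicator {q : ℝ × ℝ | 0 < q.2} g q := by
    rw [Measure.volume_eq_prod, lintegral_prod _ (hgm.indicator hS).aemeasurable]
    refine lintegral_congr fun s => ?_
    rw [← lintegral_indicator measurableSet_Ioi]
    rfl
  rw [show (∫⁻ s : ℝ, ∫⁻ ρ in Set.Ioi (0:ℝ), ENNReal.ofReal (ρ ^ n) *
      (f (s / √(s ^ 2 + ρ ^ 2)) * h √(s ^ 2 + ρ ^ 2))) = 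
      ∫⁻ s : ℝ, ∫⁻ ρ in Set.Ioi (0:ℝ), g (s, ρ) from rfl, e1, ← lintegral_comp_polarCoord_symm]
  rw [← lintegral_indicator polarCoord.open_target.measurableSet]
  have e2 : ∀ p : ℝ × ℝ, polarCoord.target.indicator (fun p => ENNReal.ofReal p.1 • 
      Set.indicator {q : ℝ × ℝ | 0 < q.2} g (polarCoord.symm p)) p = 
      (Set.Ioi 0).indicator (fun r => ENNReal.ofReal (r ^ (n + 1)) * h r) p.1 *
      (Set.Ioo 0 π).indicator (fun θ => ENNReal.ofReal (sin θ ^ n) * f (cos θ)) p.2 := by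
    rintro ⟨r, θ⟩
    by_cases hr : 0 < r
    swap
    · simp [hr, polarCoord]
    by_cases hθ : θ ∈ Set.Ioo (-π) π
    swap
    · have : θ ∉ Set.Ioo 0 π := fun h => hθ ⟨by linarith [h.1, pi_pos], h.2⟩
      rw [Set.indicator_of_notMem, Set.indicator_of_notMem this, mul_zero]
      exact fun h => hθ h.2
    rw [Set.indicator_of_mem (show (r, θ) ∈ polarCoord.target from ⟨hr, hθ⟩),
      Set.indicator_of_mem (show r ∈ Set.Ioi 0 from hr)]
    by_cases hθ0 : 0 < θ
    · have hs : 0 < sin θ := sin_pos_of_pos_of_lt_pi hθ0 hθ.2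
      rw [Set.indicator_of_mem (show θ ∈ Set.Ioo 0 π from ⟨hθ0, hθ.2⟩),
        Set.indicator_of_mem (by simp [polarCoord]; positivity)]
      have hq : √((r * cos θ) ^ 2 + (r * sin θ) ^ 2) = r := by
        rw [show (r * cos θ) ^ 2 + (r * sin θ) ^ 2 = r ^ 2 * (cos θ ^ 2 + sin θ ^ 2) by ring,
          cos_sq_add_sin_sq, mul_one, sqrt_sq hr.le]
      simp only [hg, polarCoord_symm_apply, hq, smul_eq_mul]
      rw [mul_div_cancel_left₀ _ hr.ne', mul_pow, pow_succ, ENNReal.ofReal_mul (by positivity),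
        ENNReal.ofReal_mul (by positivity)]
      ring
    · have hs : sin θ ≤ 0 := sin_nonpos_of_nonpos_of_neg_pi_le (not_lt.1 hθ0) hθ.1.le
      rw [Set.indicator_of_notMem (show θ ∉ Set.Ioo 0 π from fun h => hθ0 h.1),
        Set.indicator_of_notMem]
      · simp
      · simp only [polarCoord_symm_apply, Set.mem_ofPred_eq, not_lt]
        exact mul_nonpos_of_nonneg_of_nonpos hr.le hs
  simp only [e2]
  rw [Measure.volume_eq_prod, lintegral_prod_mul, lintegral_indicator measurableSet_Ioi,
    lintegral_indicator measurableSet_Ioo]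
  · exact Measurable.aemeasurable (Measurable.indicator (by fun_prop) measurableSet_Ioi)
  · exact Measurable.aemeasurable (Measurable.indicator (by fun_prop) measurableSet_Ioo)

theorem sphere_lintegral {E : Type*} [NormedAddCommGroup E] [InnerProductSpace ℝ E]
    [MeasurableSpace E] [BorelSpace E] [FiniteDimensional ℝ E] (n : ℕ)
    (hn : Module.finrank ℝ E = n + 2) (v : E) (hv : ‖v‖ = 1)
    (f : ℝ → ENNReal) (hf : Measurable f) :
    ∫⁻ w : sphere (0 : E) 1, f ⟪v, (w : E)⟫ ∂(volume : Measure E).toSphere =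
      (volume : Measure (ℝ ∙ v)ᗮ).toSphere Set.univ *
        ∫⁻ θ in Set.Ioo 0 π, ENNReal.ofReal (sin θ ^ n) * f (cos θ) := by
  have : Nontrivial E := Module.nontrivial_of_finrank_pos (R := ℝ) (by omega)
  set h : ℝ → ENNReal := (Set.Iio 1).indicator 1 with hh
  have hhm : Measurable h := measurable_one.indicator measurableSet_Iio
  set M := ∫⁻ r in Set.Ioi (0:ℝ), ENNReal.ofReal (r ^ (n + 1)) * h r with hM
  have hball : volume (ball (0 : E) 1) = (volume : Measure E).toSphere Set.univ * M := by
    have := polar_radial (volume : Measure E) h hhm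
    rw [hn] at this
    rw [hM, ← show n + 2 - 1 = n + 1 from rfl, ← this, ← lintegral_indicator_one measurableSet_ball]
    refine lintegral_congr fun y => ?_
    simp [hh, Set.indicator]
  have hb0 : volume (ball (0 : E) 1) ≠ 0 := (measure_ball_pos _ _ one_pos).ne'
  have hbt : volume (ball (0 : E) 1) ≠ ⊤ := measure_ball_lt_top.ne
  have hs0 : (volume : Measure E).toSphere Set.univ ≠ 0 := by
    intro h0; rw [h0, zero_mul] at hball; exact hb0 hball
  have hM0 : M ≠ 0 := by
    intro h0; rw [h0, mul_zero] at hball; exact hb0 hball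
  have hMt : M ≠ ⊤ := by
    intro h0; rw [h0, ENNReal.mul_top hs0] at hball; exact hbt hball
  have h1 := split_lintegral n hn v hv (fun s t => f (s / t) * h t) (by
    simp only [Function.uncurry_def]; fun_prop)
  rw [planar_lintegral n f h hf hhm, polar_lintegral _ _ (by fun_prop)] at h1
  have h2 : ∀ w : sphere (0 : E) 1, (∫⁻ r in Set.Ioi (0:ℝ), 
      ENNReal.ofReal (r ^ (Module.finrank ℝ E - 1)) * (f (⟪v, r • (w : E)⟫ / ‖r • (w : E)‖) * 
        h ‖r • (w : E)‖)) = f ⟪v, (w : E)⟫ * M := by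
    intro w
    rw [hM, ← lintegral_const_mul _ (by fun_prop), hn]
    refine setLIntegral_congr_fun measurableSet_Ioi fun r hr => ?_
    have hr : 0 < r := hr
    have : ‖r • (w : E)‖ = r := by simp [norm_smul, abs_of_pos hr]
    simp only [this, inner_smul_right, mul_div_cancel_left₀ _ hr.ne']
    rw [show n + 2 - 1 = n + 1 from rfl]
    ring
  simp only [h2] at h1
  rw [lintegral_mul_const _ (by fun_prop), mul_left_comm, mul_comm] at h1
  exact (ENNReal.mul_right_inj hM0 hMt).1 h1

theorem sphere_univ {E : Type*} [NormedAddCommGroup E] [InnerProductSpace ℝ E]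
    [MeasurableSpace E] [BorelSpace E] [FiniteDimensional ℝ E] (m : ℕ)
    (hm : Module.finrank ℝ E = m + 1) :
    (volume : Measure E).toSphere Set.univ =
      ENNReal.ofReal (2 * √π ^ (m + 1) / Gamma (((m : ℝ) + 1) / 2)) := by
  have : Nontrivial E := Module.nontrivial_of_finrank_pos (R := ℝ) (by omega)
  rw [Measure.toSphere_apply_univ, InnerProductSpace.volume_ball, hm]
  have hpos : (0:ℝ) < ((m : ℝ) + 1) / 2 := by positivity
  have hG := Gamma_pos_of_pos hpos
  rw [ENNReal.ofReal_one, one_pow, one_mul, ← ENNReal.ofReal_natCast,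
    ← ENNReal.ofReal_mul (by positivity)]
  push_cast
  rw [Gamma_add_one hpos.ne']
  congr 1
  field_simp

theorem sphere_ratio {E F : Type*} [NormedAddCommGroup E] [InnerProductSpace ℝ E]
    [MeasurableSpace E] [BorelSpace E] [FiniteDimensional ℝ E]
    [NormedAddCommGroup F] [InnerProductSpace ℝ F]
    [MeasurableSpace F] [BorelSpace F] [FiniteDimensional ℝ F] (m : ℕ)
    (hE : Module.finrank ℝ E = m + 2) (hF : Module.finrank ℝ F = m + 1) :
    ((volume : Measure E).toSphere Set.univ)⁻¹ * (volume : Measure F).toSphere Set.univ =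
      ENNReal.ofReal (1 / realBeta (((m : ℝ) + 1) / 2) (1 / 2)) := by
  rw [sphere_univ (m + 1) hE, sphere_univ m hF]
  have hG1 := Gamma_pos_of_pos (show (0:ℝ) < ((m : ℝ) + 1) / 2 by positivity)
  have hG2 := Gamma_pos_of_pos (show (0:ℝ) < (((m + 1 : ℕ) : ℝ) + 1) / 2 by positivity)
  rw [← ENNReal.ofReal_inv_of_pos (by positivity), ← ENNReal.ofReal_mul (by positivity)]
  congr 1
  rw [realBeta, Gamma_one_half_eq,
    show ((m : ℝ) + 1) / 2 + 1 / 2 = (((m + 1 : ℕ) : ℝ) + 1) / 2 by push_cast; ring]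
  have : √π ≠ 0 := by positivity
  field_simp
  ring

theorem incBeta_trig (m : ℕ) (a Q : ℝ) (ha0 : 0 < a) (ha1 : a < 1) (hQ : Q = 1 - a ^ 2) :
    ∫ s in (0:ℝ)..Q, s ^ (((m : ℝ) + 1) / 2 - 1) * (1 - s) ^ ((1 / 2 : ℝ) - 1) =
      2 * ∫ θ in (0:ℝ)..arccos a, sin θ ^ m := by
  have hα0 : 0 < arccos a := arccos_pos.2 ha1
  have hα1 : arccos a < π / 2 := arccos_lt_pi_div_two.2 ha0
  have hQ0 : 0 ≤ Q := by rw [hQ]; nlinarith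
  have hsα : sin (arccos a) ^ 2 = Q := by
    rw [sin_sq, cos_arccos (by linarith) ha1.le, hQ]
  have hmono : StrictMonoOn (fun θ => sin θ ^ 2) (Set.Icc 0 (arccos a)) := by
    intro x hx y hy hxy
    have h1 : sin x < sin y := sin_lt_sin_of_lt_of_le_pi_div_two (by linarith [hx.1, pi_pos])
      (by linarith [hy.2]) hxy
    have h0 : 0 ≤ sin x := sin_nonneg_of_nonneg_of_le_pi hx.1 (by linarith [hx.2])
    simp only
    gcongr
  have himg : (fun θ => sin θ ^ 2) '' Set.Ioo 0 (arccos a) = Set.Ioo 0 Q := by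
    apply Set.Subset.antisymm
    · rintro _ ⟨θ, hθ, rfl⟩
      have h1 := hmono ⟨le_rfl, hα0.le⟩ ⟨hθ.1.le, hθ.2.le⟩ hθ.1
      have h2 := hmono ⟨hθ.1.le, hθ.2.le⟩ ⟨hα0.le, le_rfl⟩ hθ.2
      simp only [hsα, sin_zero] at h1 h2
      exact ⟨by simpa using h1, h2⟩
    · have := intermediate_value_Ioo (f := fun θ => sin θ ^ 2) hα0.le (by fun_prop)
      simpa [hsα] using this
  rw [intervalIntegral.integral_of_le hQ0, integral_Ioc_eq_integral_Ioo, ← himg,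
    integral_image_eq_integral_deriv_smul_of_monotoneOn (f' := fun θ => 2 * sin θ * cos θ)
      measurableSet_Ioo _ (hmono.monotoneOn.mono Set.Ioo_subset_Icc_self),
    intervalIntegral.integral_of_le hα0.le, integral_Ioc_eq_integral_Ioo, ← integral_const_mul]
  · refine setIntegral_congr_fun measurableSet_Ioo fun θ hθ => ?_
    have hs : 0 < sin θ := sin_pos_of_pos_of_lt_pi hθ.1 (by linarith [hθ.2])
    have hc : 0 < cos θ := cos_pos_of_mem_Ioo ⟨by linarith [hθ.1, pi_pos], by linarith [hθ.2]⟩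
    simp only [smul_eq_mul]
    rw [← cos_sq', ← rpow_natCast_mul hs.le, ← rpow_natCast_mul hc.le]
    rw [show ((2:ℕ):ℝ) * (1 / 2 - 1) = -1 by norm_num, rpow_neg_one,
      show ((2:ℕ):ℝ) * (((m:ℝ) + 1) / 2 - 1) = (m:ℝ) - 1 by push_cast; ring, rpow_sub_one hs.ne',
      rpow_natCast]
    field_simp
  · intro θ _
    have := ((hasDerivAt_sin θ).pow 2).hasDerivWithinAt (s := Set.Ioo 0 (arccos a))
    simpa using! this

theorem trig_integral (m : ℕ) (a Q : ℝ) (ha0 : 0 < a) (ha1 : a < 1) (hQ : Q = 1 - a ^ 2) :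
    ∫ θ in (0:ℝ)..π, sin θ ^ m * max (|cos θ| - a) 0 = 
      Q ^ (((m : ℝ) + 1) / 2) / (((m : ℝ) + 1) / 2) -
      a * ∫ s in (0:ℝ)..Q, s ^ (((m : ℝ) + 1) / 2 - 1) * (1 - s) ^ ((1 / 2 : ℝ) - 1) := by
  have hα0 : 0 < arccos a := arccos_pos.2 ha1
  have hα1 : arccos a < π / 2 := arccos_lt_pi_div_two.2 ha0
  have hca : cos (arccos a) = a := cos_arccos (by linarith) ha1.le
  have hQ0 : 0 ≤ Q := by rw [hQ]; nlinarith
  have hii : ∀ u v : ℝ, IntervalIntegrable (fun θ => sin θ ^ m * max (|cos θ| - a) 0) volume u v :=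
    fun u v => Continuous.intervalIntegrable (by fun_prop) _ _
  rw [incBeta_trig m a Q ha0 ha1 hQ,
    ← intervalIntegral.integral_add_adjacent_intervals (hii 0 (π / 2)) (hii (π / 2) π)]
  have hsym : ∫ θ in (π / 2)..π, sin θ ^ m * max (|cos θ| - a) 0 =
      ∫ θ in (0:ℝ)..(π / 2), sin θ ^ m * max (|cos θ| - a) 0 := by
    have := intervalIntegral.integral_comp_sub_left (a := 0) (b := π / 2)
      (fun θ => sin θ ^ m * max (|cos θ| - a) 0) π
    simp only [sin_pi_sub, cos_pi_sub, abs_neg] at this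
    rw [this]
    congr 1 <;> ring
  rw [hsym, ← intervalIntegral.integral_add_adjacent_intervals (hii 0 (arccos a))
    (hii (arccos a) (π / 2))]
  have hz : ∫ θ in (arccos a)..(π / 2), sin θ ^ m * max (|cos θ| - a) 0 = 0 := by
    rw [intervalIntegral.integral_congr (g := fun _ => (0:ℝ))]
    · simp
    · intro θ hθ
      rw [Set.uIcc_of_le hα1.le] at hθ
      have h1 : cos θ ≤ a := by
        rw [← hca]
        exact cos_le_cos_of_nonneg_of_le_pi hα0.le (by linarith [hθ.2, pi_pos]) hθ.1
      have h2 : 0 ≤ cos θ := cos_nonneg_of_mem_Icc ⟨by linarith [hθ.1, pi_pos], hθ.2⟩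
      simp [abs_of_nonneg h2, h1]
  have hm : ∫ θ in (0:ℝ)..(arccos a), sin θ ^ m * max (|cos θ| - a) 0 =
      ∫ θ in (0:ℝ)..(arccos a), (sin θ ^ m * cos θ - a * sin θ ^ m) := by
    refine intervalIntegral.integral_congr fun θ hθ => ?_
    rw [Set.uIcc_of_le hα0.le] at hθ
    have h1 : a ≤ cos θ := by
      rw [← hca]
      exact cos_le_cos_of_nonneg_of_le_pi hθ.1 (by linarith [pi_pos]) hθ.2
    rw [abs_of_nonneg (by linarith), max_eq_left (by linarith)]
    ring
  have hF : ∫ θ in (0:ℝ)..(arccos a), sin θ ^ m * cos θ = sin (arccos a) ^ (m + 1) / (m + 1) := by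
    rw [intervalIntegral.integral_eq_sub_of_hasDerivAt (f := fun θ => sin θ ^ (m + 1) / (m + 1))]
    · simp
    · intro θ _
      have := ((hasDerivAt_sin θ).pow (m + 1)).div_const ((m : ℝ) + 1)
      convert! this using 1
      have : (m : ℝ) + 1 ≠ 0 := by positivity
      push_cast
      field_simp
    · exact Continuous.intervalIntegrable (by fun_prop) _ _
  rw [hz, hm, intervalIntegral.integral_sub (Continuous.intervalIntegrable (by fun_prop) _ _)
    (Continuous.intervalIntegrable (by fun_prop) _ _), hF, intervalIntegral.integral_const_mul,
    sin_arccos, ← hQ, sqrt_eq_rpow, ← rpow_natCast, ← rpow_mul hQ0]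
  rw [show (1 / 2 : ℝ) * ((m + 1 : ℕ) : ℝ) = ((m : ℝ) + 1) / 2 by push_cast; ring]
  field_simp
  ring

theorem trig_lintegral (m : ℕ) (a Q : ℝ) (ha0 : 0 < a) (ha1 : a < 1) (hQ : Q = 1 - a ^ 2) :
    ∫⁻ θ in Set.Ioo 0 π, ENNReal.ofReal (sin θ ^ m) * ENNReal.ofReal (|cos θ| - a) =
      ENNReal.ofReal (Q ^ (((m : ℝ) + 1) / 2) / (((m : ℝ) + 1) / 2) -
      a * ∫ s in (0:ℝ)..Q, s ^ (((m : ℝ) + 1) / 2 - 1) * (1 - s) ^ ((1 / 2 : ℝ) - 1)) := by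
  rw [← trig_integral m a Q ha0 ha1 hQ, intervalIntegral.integral_of_le pi_pos.le,
    integral_Ioc_eq_integral_Ioo, ofReal_integral_eq_lintegral_ofReal]
  · refine setLIntegral_congr_fun measurableSet_Ioo fun θ hθ => ?_
    have := (sin_pos_of_pos_of_lt_pi hθ.1 hθ.2).le
    rw [ENNReal.ofReal_mul (by positivity)]
    congr 1
    rcases le_total (|cos θ| - a) 0 with h | h
    · rw [max_eq_right h, ENNReal.ofReal_of_nonpos h, ENNReal.ofReal_zero]
    · rw [max_eq_left h]
  · exact ((Continuous.integrableOn_Icc (by fun_prop)).mono_set Set.Ioo_subset_Icc_self)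
  · filter_upwards [ae_restrict_mem measurableSet_Ioo] with θ hθ
    have := (sin_pos_of_pos_of_lt_pi hθ.1 hθ.2).le
    positivity

theorem pos_on_ball {E : Type*} [NormedAddCommGroup E] [InnerProductSpace ℝ E]
    (w c : E) (hw : ‖w‖ = 1) (b r : ℝ) (hr : 0 < r) :
    (∀ u ∈ ball c r, 0 < ⟪w, u⟫ - b) ↔ r ≤ ⟪w, c⟫ - b := by
  constructor
  · intro h
    by_contra! hlt
    set t := max (⟪w, c⟫ - b) 0 with ht
    have ht0 : 0 ≤ t := le_max_right _ _
    have htr : t < r := max_lt hlt hr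
    have := h (c - t • w) (by
      rw [mem_ball, dist_eq_norm]
      simpa [norm_smul, hw, abs_of_nonneg ht0] using htr)
    rw [inner_sub_right, inner_smul_right, real_inner_self_eq_norm_sq, hw] at this
    have h2 : ⟪w, c⟫ - b ≤ t := le_max_left _ _
    linarith
  · intro h u hu
    rw [mem_ball, dist_eq_norm] at hu
    have h1 := abs_real_inner_le_norm w (u - c)
    rw [hw, one_mul, inner_sub_right] at h1
    have := (abs_le.1 h1).1
    linarith

theorem neg_on_ball {E : Type*} [NormedAddCommGroup E] [InnerProductSpace ℝ E]
    (w c : E) (hw : ‖w‖ = 1) (b r : ℝ) (hr : 0 < r) :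
    (∀ u ∈ ball c r, ⟪w, u⟫ - b < 0) ↔ ⟪w, c⟫ - b ≤ -r := by
  have := pos_on_ball (-w) c (by simpa using hw) (-b) r hr
  simp only [inner_neg_left] at this
  constructor
  · intro h
    have := this.1 fun u hu => by linarith [h u hu]
    linarith
  · intro h u hu
    have := this.2 (by linarith) u hu
    linarith

theorem separates_iff {n : ℕ} (w c x : EuclideanSpace ℝ (Fin n)) (hw : ‖w‖ = 1) (b r p : ℝ)
    (hr : 0 < r) (hp : 0 < p) :
    Separates w b c r x p ↔ (r ≤ ⟪w, c⟫ - b ∧ ⟪w, x⟫ - b ≤ -p) ∨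
      (⟪w, c⟫ - b ≤ -r ∧ p ≤ ⟪w, x⟫ - b) := by
  rw [Separates, pos_on_ball w c hw b r hr, pos_on_ball w x hw b p hp, neg_on_ball w c hw b r hr,
    neg_on_ball w x hw b p hp]

theorem slice_measure {n : ℕ} (w c x : EuclideanSpace ℝ (Fin n)) (hw : ‖w‖ = 1) (r p k : ℝ)
    (hr : 0 < r) (hp : 0 < p) (hk : max ‖c‖ ‖x‖ ≤ k) :
    volume.restrict (Set.Icc (-k) k) {b : ℝ | Separates w b c r x p} =
      ENNReal.ofReal (|⟪w, c - x⟫| - (p + r)) := by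
  have hset : {b : ℝ | Separates w b c r x p} = Set.Icc (⟪w, x⟫ + p) (⟪w, c⟫ - r) ∪
      Set.Icc (⟪w, c⟫ + r) (⟪w, x⟫ - p) := by
    ext b
    simp only [Set.mem_ofPred_eq, separates_iff w c x hw b r p hr hp, Set.mem_union, Set.mem_Icc]
    constructor <;> rintro (⟨h1, h2⟩ | ⟨h1, h2⟩)
    · left; constructor <;> linarith
    · right; constructor <;> linarith
    · left; constructor <;> linarith
    · right; constructor <;> linarith
  have hc := abs_le.1 (abs_real_inner_le_norm w c)
  have hx := abs_le.1 (abs_real_inner_le_norm w x)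
  rw [hw, one_mul] at hc hx
  have hck := (le_max_left _ _).trans hk
  have hxk := (le_max_right _ _).trans hk
  rw [hset, Measure.restrict_apply (measurableSet_Icc.union measurableSet_Icc), 
    Set.inter_eq_left.2 (Set.union_subset (Set.Icc_subset_Icc (by linarith) (by linarith))
      (Set.Icc_subset_Icc (by linarith) (by linarith))), inner_sub_right]
  rcases le_total 0 (⟪w, c⟫ - ⟪w, x⟫) with h | h
  · rw [abs_of_nonneg h, Set.Icc_eq_empty (a := ⟪w, c⟫ + r) (by linarith), Set.union_empty,
      Real.volume_Icc]
    congr 1; ring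
  · rw [abs_of_nonpos h, Set.Icc_eq_empty (a := ⟪w, x⟫ + p) (by linarith), Set.empty_union,
      Real.volume_Icc]
    congr 1; ring

theorem stmt10 (n : ℕ) (hn : 2 ≤ n) (c x : EuclideanSpace ℝ (Fin n)) (r p δ k : ℝ)
    (hr : 0 < r) (hp : 0 < p) (hδ : 0 < δ) (hdist : ‖c - x‖ = p + r + δ)
    (hk : max ‖c‖ ‖x‖ ≤ k) (hk0 : 0 < max ‖c‖ ‖x‖)
    (Q : ℝ) (hQ : Q = 1 - ((p + r) / (p + r + δ)) ^ 2)
    (μb : Measure ℝ)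
    (hμb : μb = (ENNReal.ofReal (2 * k))⁻¹ • volume.restrict (Set.Icc (-k) k)) :
    (uniformSphere n).prod μb
        {q : Metric.sphere (0 : EuclideanSpace ℝ (Fin n)) 1 × ℝ |
          Separates (q.1 : EuclideanSpace ℝ (Fin n)) q.2 c r x p} =
      ENNReal.ofReal ((‖c - x‖ / (2 * k)) *
        (Q ^ (((n : ℝ) - 1) / 2) /
            ((((n : ℝ) - 1) / 2) * realBeta (((n : ℝ) - 1) / 2) (1 / 2)) -
          ((p + r) / (p + r + δ)) * regIncBeta Q (((n : ℝ) - 1) / 2) (1 / 2))) := by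
  obtain ⟨m, rfl⟩ : ∃ m, n = m + 2 := ⟨n - 2, by omega⟩
  have hkpos : 0 < k := hk0.trans_le hk
  set a := (p + r) / (p + r + δ) with ha
  set L := p + r + δ with hL
  have hLpos : 0 < L := by positivity
  have ha0 : 0 < a := by positivity
  have ha1 : a < 1 := by rw [ha, div_lt_one hLpos]; linarith
  have haL : p + r = L * a := by rw [ha]; field_simp
  have hfin : Module.finrank ℝ (EuclideanSpace ℝ (Fin (m + 2))) = m + 2 := by simp
  set v : EuclideanSpace ℝ (Fin (m + 2)) := L⁻¹ • (c - x) with hv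
  have hv1 : ‖v‖ = 1 := by
    rw [hv, norm_smul, hdist, norm_inv, norm_of_nonneg hLpos.le, inv_mul_cancel₀ hLpos.ne']
  have hcx : c - x = L • v := by rw [hv, smul_smul, mul_inv_cancel₀ hLpos.ne', one_smul]
  have hv0 : v ≠ 0 := by rintro h; simp [h] at hv1
  have hfr : Module.finrank ℝ (ℝ ∙ v)ᗮ = m + 1 := by
    have := Submodule.finrank_add_finrank_orthogonal (ℝ ∙ v)
    rw [finrank_span_singleton hv0, hfin] at this
    omega
  have hmeas : MeasurableSet {q : Metric.sphere (0 : EuclideanSpace ℝ (Fin (m + 2))) 1 × ℝ |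
          Separates (q.1 : EuclideanSpace ℝ (Fin (m + 2))) q.2 c r x p} := by
    have : {q : Metric.sphere (0 : EuclideanSpace ℝ (Fin (m + 2))) 1 × ℝ |
          Separates (q.1 : EuclideanSpace ℝ (Fin (m + 2))) q.2 c r x p} =
        {q | (r ≤ ⟪q.1.1, c⟫ - q.2 ∧ ⟪q.1.1, x⟫ - q.2 ≤ -p) ∨
          (⟪q.1.1, c⟫ - q.2 ≤ -r ∧ p ≤ ⟪q.1.1, x⟫ - q.2)} := by
      ext q
      exact separates_iff q.1.1 c x (by simp) q.2 r p hr hp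
    rw [this]
    have hc : Measurable fun q : Metric.sphere (0 : EuclideanSpace ℝ (Fin (m + 2))) 1 × ℝ =>
        ⟪q.1.1, c⟫ - q.2 := by fun_prop
    have hx : Measurable fun q : Metric.sphere (0 : EuclideanSpace ℝ (Fin (m + 2))) 1 × ℝ =>
        ⟪q.1.1, x⟫ - q.2 := by fun_prop
    exact ((measurableSet_le measurable_const hc).inter
      (measurableSet_le hx measurable_const)).union
      ((measurableSet_le hc measurable_const).inter (measurableSet_le measurable_const hx))
  have : SFinite μb := by rw [hμb]; infer_instance
  rw [Measure.prod_apply hmeas]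
  have hslice : ∀ w : Metric.sphere (0 : EuclideanSpace ℝ (Fin (m + 2))) 1,
      μb (Prod.mk w ⁻¹' {q : Metric.sphere (0 : EuclideanSpace ℝ (Fin (m + 2))) 1 × ℝ |
          Separates (q.1 : EuclideanSpace ℝ (Fin (m + 2))) q.2 c r x p}) =
      ENNReal.ofReal (L / (2 * k)) * ENNReal.ofReal (|⟪v, (w : EuclideanSpace ℝ (Fin (m + 2)))⟫| - a) := by
    intro w
    rw [hμb, Measure.smul_apply]
    have := slice_measure w.1 c x (by simp) r p k hr hp hk
    rw [show (Prod.mk w ⁻¹' {q : Metric.sphere (0 : EuclideanSpace ℝ (Fin (m + 2))) 1 × ℝ |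
          Separates (q.1 : EuclideanSpace ℝ (Fin (m + 2))) q.2 c r x p}) =
        {b : ℝ | Separates w.1 b c r x p} from rfl, this, hcx, inner_smul_right, abs_mul,
      abs_of_pos hLpos, haL, ← mul_sub, smul_eq_mul, ← ENNReal.ofReal_inv_of_pos (by positivity),
      ENNReal.ofReal_mul hLpos.le, ← mul_assoc, ← ENNReal.ofReal_mul (by positivity),
      real_inner_comm, inv_mul_eq_div]
  simp only [hslice]
  rw [lintegral_const_mul _ (by fun_prop), uniformSphere, lintegral_smul_measure,
    sphere_lintegral m hfin v hv1 (fun t => ENNReal.ofReal (|t| - a)) (by fun_prop),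
    trig_lintegral m a Q ha0 ha1 hQ, smul_eq_mul, ← mul_assoc (_⁻¹), sphere_ratio m hfin hfr]
  have hG1 := Gamma_pos_of_pos (show (0:ℝ) < ((m : ℝ) + 1) / 2 by positivity)
  have hG2 := Gamma_pos_of_pos (show (0:ℝ) < ((m : ℝ) + 1) / 2 + 1 / 2 by positivity)
  have hG3 := Gamma_pos_of_pos (show (0:ℝ) < 1 / 2 by positivity)
  have hB : 0 < realBeta (((m : ℝ) + 1) / 2) (1 / 2) := by rw [realBeta]; positivity
  rw [← ENNReal.ofReal_mul (by positivity), ← ENNReal.ofReal_mul (by positivity), hdist,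
    show (((m + 2 : ℕ) : ℝ) - 1) / 2 = ((m : ℝ) + 1) / 2 by push_cast; ring, regIncBeta]
  congr 2
  field_simp
end

section
/- Let n ≥ 2 and α ∈ (0, π/2). Then I(cos²α; (n−1)/2, 1/2) · sin α ≤ (cos^{n−1} α) / ( ((n−1)/2) · B((n−1)/2, 1/2) ) ≤ I(cos²α; (n−1)/2, 1/2). -/
open MeasureTheory Real

theorem stmt13 (n : ℕ) (hn : 2 ≤ n) (α : ℝ) (hα : α ∈ Set.Ioo 0 (π / 2)) :
    regIncBeta (cos α ^ 2) (((n : ℝ) - 1) / 2) (1 / 2) * sin α ≤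
        cos α ^ ((n : ℝ) - 1) /
          ((((n : ℝ) - 1) / 2) * realBeta (((n : ℝ) - 1) / 2) (1 / 2)) ∧
      cos α ^ ((n : ℝ) - 1) /
          ((((n : ℝ) - 1) / 2) * realBeta (((n : ℝ) - 1) / 2) (1 / 2)) ≤
        regIncBeta (cos α ^ 2) (((n : ℝ) - 1) / 2) (1 / 2) := by
  obtain ⟨h0, h1⟩ := hα
  have hc : 0 < cos α := cos_pos_of_mem_Ioo ⟨by linarith, h1⟩
  have hs : 0 < sin α := sin_pos_of_pos_of_lt_pi h0 (by linarith [pi_pos])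
  have hsc : sin α ^ 2 + cos α ^ 2 = 1 := sin_sq_add_cos_sq α
  have hn' : (2:ℝ) ≤ n := by exact_mod_cast hn
  obtain ⟨y, hy⟩ : ∃ y : ℝ, y = ((n : ℝ) - 1) / 2 := ⟨_, rfl⟩
  have hy0 : 0 < y := by rw [hy]; linarith
  have hn2 : (n : ℝ) - 1 = 2 * y := by rw [hy]; ring
  rw [← hy, hn2]
  have hB : 0 < realBeta y (1 / 2) := by
    unfold realBeta
    have a1 := Gamma_pos_of_pos hy0
    have a2 := Gamma_pos_of_pos (show (0:ℝ) < 1 / 2 by norm_num)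
    have a3 := Gamma_pos_of_pos (show (0:ℝ) < y + 1 / 2 by linarith)
    positivity
  have hk : cos α ^ (2 * y) = (cos α ^ 2) ^ y := by
    rw [rpow_mul hc.le]; norm_num
  rw [hk]
  have hk0 : 0 < cos α ^ 2 := by positivity
  have hk1 : 1 - cos α ^ 2 = sin α ^ 2 := by linarith
  have hks : 0 < sin α ^ 2 := by positivity
  obtain ⟨κ, hκ⟩ : ∃ κ : ℝ, κ = cos α ^ 2 := ⟨_, rfl⟩
  rw [← hκ] at hk0 hk1 ⊢
  have hI : IntervalIntegrable (fun s : ℝ => s ^ (y - 1)) volume 0 κ :=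
    intervalIntegral.intervalIntegrable_rpow' (by linarith)
  have hcont : ContinuousOn (fun s : ℝ => (1 - s) ^ ((1:ℝ) / 2 - 1)) (Set.uIcc 0 κ) := by
    rw [Set.uIcc_of_le hk0.le]
    apply ContinuousOn.rpow_const (by fun_prop)
    intro x hx
    left
    have := hx.2
    linarith
  have hJ : IntervalIntegrable (fun s : ℝ => s ^ (y - 1) * (1 - s) ^ ((1:ℝ) / 2 - 1)) volume 0 κ :=
    hI.mul_continuousOn hcont
  have hint : ∫ s in (0:ℝ)..κ, s ^ (y - 1) = κ ^ y / y := by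
    rw [integral_rpow (Or.inl (by linarith))]
    simp [zero_rpow hy0.ne']
  have hsin : (sin α ^ 2) ^ ((1:ℝ) / 2 - 1) = (sin α)⁻¹ := by
    rw [← rpow_natCast, ← rpow_mul hs.le, ← rpow_neg_one]
    norm_num
  have hlow : κ ^ y / y ≤ ∫ s in (0:ℝ)..κ, s ^ (y - 1) * (1 - s) ^ ((1:ℝ) / 2 - 1) := by
    rw [← hint]
    apply intervalIntegral.integral_mono_on hk0.le hI hJ
    intro x hx
    have hx0 := hx.1
    have hx1 := hx.2
    have : 1 ≤ (1 - x) ^ ((1:ℝ) / 2 - 1) :=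
      one_le_rpow_of_pos_of_le_one_of_nonpos (by linarith) (by linarith) (by norm_num)
    exact le_mul_of_one_le_right (rpow_nonneg hx0 _) this
  have hupp : (∫ s in (0:ℝ)..κ, s ^ (y - 1) * (1 - s) ^ ((1:ℝ) / 2 - 1))
      ≤ κ ^ y / y * (sin α)⁻¹ := by
    rw [← hint, ← intervalIntegral.integral_mul_const]
    apply intervalIntegral.integral_mono_on hk0.le hJ (hI.mul_const _)
    intro x hx
    have hx0 := hx.1
    have hx1 := hx.2
    have : (1 - x) ^ ((1:ℝ) / 2 - 1) ≤ (sin α)⁻¹ := by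
      rw [← hsin]
      exact rpow_le_rpow_of_nonpos hks (by linarith) (by norm_num)
    exact mul_le_mul_of_nonneg_left this (rpow_nonneg hx0 _)
  unfold regIncBeta
  rw [← div_div]
  constructor
  · rw [div_mul_eq_mul_div]
    apply div_le_div_of_nonneg_right _ hB.le
    rw [← div_eq_mul_inv, le_div_iff₀ hs] at hupp
    exact hupp
  · exact div_le_div_of_nonneg_right hlow hB.le
end

section
/- Let n ≥ 2, let σ ∈ (0, 1), set κ = 1 − σ², and let L and k be real numbers with 0 < L ≤ 2k. Then 0 ≤ (L/(2k)) · ( κ^{(n−1)/2} / ( ((n−1)/2) · B((n−1)/2, 1/2) ) − σ · I(κ; (n−1)/2, 1/2) ) ≤ 1. (In particular, the closed-form expression for the probability that a fully random hyperplane separates two balls is indeed a number in [0,1].) -/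
open MeasureTheory Real

lemma aux_beta_pos {y : ℝ} (hy : 0 < y) : 0 < realBeta y (1 / 2) := by
  unfold realBeta
  have h1 := Gamma_pos_of_pos hy
  have h2 : 0 < Gamma (1 / 2 : ℝ) := Gamma_pos_of_pos (by norm_num)
  have h3 : 0 < Gamma (y + 1 / 2) := Gamma_pos_of_pos (by linarith)
  positivity

lemma aux_beta_ge {y : ℝ} (hy : 1 / 2 ≤ y) : 1 ≤ y * realBeta y (1 / 2) := by
  have hy0 : 0 < y := by linarith
  have h1 := Gamma_pos_of_pos hy0
  have h3 : 0 < Gamma (y + 1 / 2) := Gamma_pos_of_pos (by linarith)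
  have h4 := Real.Gamma_mul_add_mul_le_rpow_Gamma_mul_rpow_Gamma (s := y) (t := y + 1)
    (a := 1 / 2) (b := 1 / 2) hy0 (by linarith) (by norm_num) (by norm_num) (by norm_num)
  rw [show 1 / 2 * y + 1 / 2 * (y + 1) = y + 1 / 2 by ring, Real.Gamma_add_one hy0.ne',
    ← Real.sqrt_eq_rpow, ← Real.sqrt_eq_rpow, ← Real.sqrt_mul h1.le] at h4
  have h5 : √(Gamma y * (y * Gamma y)) ≤ y * Gamma y * √π := by
    apply Real.sqrt_le_iff.mpr
    refine ⟨by positivity, ?_⟩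
    rw [mul_pow, Real.sq_sqrt Real.pi_pos.le]
    have h6 : 1 ≤ y * π := by nlinarith [Real.pi_gt_three]
    have h7 : 0 ≤ y * Gamma y ^ 2 := by positivity
    nlinarith
  unfold realBeta
  rw [Real.Gamma_one_half_eq, ← mul_div_assoc, le_div_iff₀ h3]
  linarith

lemma aux_int {y σ : ℝ} (hy : 0 < y) (h0 : 0 < σ) (h1 : σ < 1) :
    0 ≤ (∫ s in (0:ℝ)..(1 - σ ^ 2), s ^ (y - 1) * (1 - s) ^ ((1 / 2 : ℝ) - 1)) ∧
    σ * (∫ s in (0:ℝ)..(1 - σ ^ 2), s ^ (y - 1) * (1 - s) ^ ((1 / 2 : ℝ) - 1))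
      ≤ (1 - σ ^ 2) ^ y / y := by
  have hk : 0 ≤ 1 - σ ^ 2 := by nlinarith
  have hs2 : 0 < σ ^ 2 := by positivity
  have hi : IntervalIntegrable (fun s : ℝ => s ^ (y - 1)) volume 0 (1 - σ ^ 2) :=
    intervalIntegral.intervalIntegrable_rpow' (by linarith)
  have hi2 : IntervalIntegrable (fun s : ℝ => s ^ (y - 1) * (1 - s) ^ ((1 / 2 : ℝ) - 1))
      volume 0 (1 - σ ^ 2) := by
    apply hi.mul_continuousOn
    rw [Set.uIcc_of_le hk]
    intro s hs
    apply ContinuousAt.continuousWithinAt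
    apply ContinuousAt.rpow_const (by fun_prop)
    left
    have := hs.2
    linarith
  constructor
  · apply intervalIntegral.integral_nonneg hk
    intro s hs
    have := hs.1
    have := hs.2
    have h3 : 0 ≤ 1 - s := by linarith
    positivity
  · have e : (1 - σ ^ 2) ^ y / y = ∫ s in (0:ℝ)..(1 - σ ^ 2), s ^ (y - 1) := by
      rw [integral_rpow (Or.inl (by linarith)), sub_add_cancel, Real.zero_rpow hy.ne', sub_zero]
    rw [e, ← intervalIntegral.integral_const_mul]
    apply intervalIntegral.integral_mono_on hk (hi2.const_mul σ) hi
    intro s hs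
    have hs0 := hs.1
    have hs1 := hs.2
    have h3 : (1 - s) ^ ((1 / 2 : ℝ) - 1) ≤ σ⁻¹ := by
      have : (1 - s) ^ ((1 / 2 : ℝ) - 1) ≤ (σ ^ 2) ^ ((1 / 2 : ℝ) - 1) :=
        Real.rpow_le_rpow_of_nonpos hs2 (by linarith) (by norm_num)
      refine this.trans (le_of_eq ?_)
      rw [← Real.rpow_natCast, ← Real.rpow_mul h0.le, ← Real.rpow_neg_one]
      norm_num
    have h4 : 0 ≤ s ^ (y - 1) := by positivity
    have h5 : σ * (1 - s) ^ ((1 / 2 : ℝ) - 1) ≤ 1 := by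
      calc _ ≤ σ * σ⁻¹ := by gcongr
        _ = 1 := mul_inv_cancel₀ h0.ne'
    nlinarith

theorem stmt14 (n : ℕ) (hn : 2 ≤ n) (σ : ℝ) (hσ : σ ∈ Set.Ioo (0:ℝ) 1)
    (κ : ℝ) (hκ : κ = 1 - σ ^ 2) (L k : ℝ) (hL : 0 < L) (hLk : L ≤ 2 * k) :
    0 ≤ (L / (2 * k)) *
        (κ ^ (((n : ℝ) - 1) / 2) /
            ((((n : ℝ) - 1) / 2) * realBeta (((n : ℝ) - 1) / 2) (1 / 2)) -
          σ * regIncBeta κ (((n : ℝ) - 1) / 2) (1 / 2)) ∧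
      (L / (2 * k)) *
        (κ ^ (((n : ℝ) - 1) / 2) /
            ((((n : ℝ) - 1) / 2) * realBeta (((n : ℝ) - 1) / 2) (1 / 2)) -
          σ * regIncBeta κ (((n : ℝ) - 1) / 2) (1 / 2)) ≤ 1 := by
  subst hκ
  obtain ⟨h0, h1⟩ := hσ
  have hn' : (2 : ℝ) ≤ n := by exact_mod_cast hn
  generalize hy : ((n : ℝ) - 1) / 2 = y
  have hy2 : 1 / 2 ≤ y := by linarith
  have hy0 : 0 < y := by linarith
  have hB := aux_beta_pos hy0
  have hB1 := aux_beta_ge hy2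
  obtain ⟨hJ0, hJ1⟩ := aux_int hy0 h0 h1
  unfold regIncBeta
  generalize (∫ s in (0:ℝ)..(1 - σ ^ 2), s ^ (y - 1) * (1 - s) ^ ((1 / 2 : ℝ) - 1)) = J at *
  generalize realBeta y (1 / 2) = B at *
  have hk : 0 ≤ 1 - σ ^ 2 := by nlinarith
  have hp : (1 - σ ^ 2) ^ y ≤ 1 := Real.rpow_le_one hk (by nlinarith) hy0.le
  have hr0 : 0 ≤ L / (2 * k) := div_nonneg hL.le (by linarith)
  have hr1 : L / (2 * k) ≤ 1 := div_le_one_of_le₀ hLk (by linarith)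
  have hE0 : 0 ≤ (1 - σ ^ 2) ^ y / (y * B) - σ * (J / B) := by
    rw [← div_div, ← mul_div_assoc, ← sub_div]
    exact div_nonneg (by linarith) hB.le
  have hE1 : (1 - σ ^ 2) ^ y / (y * B) - σ * (J / B) ≤ 1 := by
    have : (1 - σ ^ 2) ^ y / (y * B) ≤ 1 := div_le_one_of_le₀ (by linarith) (by linarith)
    have : 0 ≤ σ * (J / B) := by positivity
    linarith
  exact ⟨mul_nonneg hr0 hE0, mul_le_one₀ hr1 hE0 hE1⟩
end

section
/- Let n ≥ 2 and σ ∈ (0, 1), and set κ = 1 − σ². Then κ^{(n−1)/2} / ( ((n−1)/2) · B((n−1)/2, 1/2) ) − σ · I(κ; (n−1)/2, 1/2) ≤ (1 − σ) · I(κ; (n−1)/2, 1/2) ≤ 1 − σ. (Consequently, with σ = (p+r)/(p+r+δ), the probability that a fully random hyperplane separates the two balls is at most δ/(2k).) -/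
open MeasureTheory Real

theorem betaIntegrable_aux (a b : ℝ) (ha : 0 < a) (hb : 0 < b) :
    IntervalIntegrable (fun s : ℝ => s ^ (a - 1) * (1 - s) ^ (b - 1)) volume 0 1 := by
  have h := (Complex.betaIntegral_convergent (u := (a : ℂ)) (v := (b : ℂ))
    (by simpa using ha) (by simpa using hb)).norm
  refine h.congr_uIoo ?_
  intro s hs
  rw [Set.uIoo_of_le zero_le_one] at hs
  have h1 : 0 < 1 - s := by linarith [hs.2]
  simp only [norm_mul]
  rw [show (1 : ℂ) - (s : ℂ) = ((1 - s : ℝ) : ℂ) by push_cast; rfl,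
    Complex.norm_cpow_eq_rpow_re_of_pos hs.1, Complex.norm_cpow_eq_rpow_re_of_pos h1]
  simp

theorem betaIntegral_aux (a b : ℝ) (ha : 0 < a) (hb : 0 < b) :
    (∫ s in (0:ℝ)..1, s ^ (a - 1) * (1 - s) ^ (b - 1)) = realBeta a b := by
  have h := ProbabilityTheory.beta_eq_betaIntegralReal a b ha hb
  have h2 : realBeta a b = ProbabilityTheory.beta a b := rfl
  rw [h2, h, Complex.betaIntegral]
  have : (∫ x in (0:ℝ)..1, (x : ℂ) ^ ((a : ℂ) - 1) * (1 - (x : ℂ)) ^ ((b : ℂ) - 1))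
      = ((∫ s in (0:ℝ)..1, s ^ (a - 1) * (1 - s) ^ (b - 1) : ℝ) : ℂ) := by
    rw [← intervalIntegral.integral_ofReal]
    refine intervalIntegral.integral_congr ?_
    intro s hs
    rw [Set.uIcc_of_le zero_le_one] at hs
    have h1 : 0 ≤ 1 - s := by linarith [hs.2]
    simp only []
    rw [Complex.ofReal_mul, Complex.ofReal_cpow hs.1, Complex.ofReal_cpow h1]
    push_cast
    rfl
  rw [this, Complex.ofReal_re]

theorem stmt15 (n : ℕ) (hn : 2 ≤ n) (σ : ℝ) (hσ : σ ∈ Set.Ioo (0:ℝ) 1)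
    (κ : ℝ) (hκ : κ = 1 - σ ^ 2) :
    κ ^ (((n : ℝ) - 1) / 2) /
          ((((n : ℝ) - 1) / 2) * realBeta (((n : ℝ) - 1) / 2) (1 / 2)) -
        σ * regIncBeta κ (((n : ℝ) - 1) / 2) (1 / 2) ≤
      (1 - σ) * regIncBeta κ (((n : ℝ) - 1) / 2) (1 / 2) ∧
    (1 - σ) * regIncBeta κ (((n : ℝ) - 1) / 2) (1 / 2) ≤ 1 - σ := by
  obtain ⟨h0, h1⟩ := hσ
  have hn' : (2 : ℝ) ≤ n := by exact_mod_cast hn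
  have ha : 0 < ((n : ℝ) - 1) / 2 := by linarith
  generalize ((n : ℝ) - 1) / 2 = a at ha
  have hk0 : 0 < κ := by rw [hκ]; nlinarith
  have hk1 : κ < 1 := by rw [hκ]; nlinarith
  have hB : 0 < realBeta a (1 / 2) := ProbabilityTheory.beta_pos ha (by norm_num)
  have hint := betaIntegrable_aux a (1 / 2) ha (by norm_num)
  have hintk : IntervalIntegrable (fun s : ℝ => s ^ (a - 1) * (1 - s) ^ ((1 / 2 : ℝ) - 1))
      volume 0 κ := hint.mono_set (by
    rw [Set.uIcc_of_le hk0.le, Set.uIcc_of_le zero_le_one]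
    exact Set.Icc_subset_Icc le_rfl hk1.le)
  have key1 : κ ^ a / (a * realBeta a (1 / 2)) ≤ regIncBeta κ a (1 / 2) := by
    unfold regIncBeta
    rw [← div_div]
    refine div_le_div_of_nonneg_right ?_ hB.le
    have e : (∫ s in (0:ℝ)..κ, s ^ (a - 1)) = κ ^ a / a := by
      rw [integral_rpow (Or.inl (by linarith))]
      simp [Real.zero_rpow ha.ne']
    rw [← e]
    refine intervalIntegral.integral_mono_on hk0.le
      (intervalIntegral.intervalIntegrable_rpow' (by linarith)) hintk ?_
    intro s hs
    have hs1 : 0 < 1 - s := by linarith [hs.2]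
    have : 1 ≤ (1 - s) ^ ((1 / 2 : ℝ) - 1) :=
      Real.one_le_rpow_of_pos_of_le_one_of_nonpos hs1 (by linarith [hs.1]) (by norm_num)
    exact le_mul_of_one_le_right (Real.rpow_nonneg hs.1 _) this
  have key2 : regIncBeta κ a (1 / 2) ≤ 1 := by
    unfold regIncBeta
    rw [div_le_one hB, ← betaIntegral_aux a (1 / 2) ha (by norm_num)]
    refine intervalIntegral.integral_mono_interval le_rfl hk0.le hk1.le ?_ hint
    filter_upwards [ae_restrict_mem measurableSet_Ioc] with s hs
    have hs1 : 0 ≤ 1 - s := by linarith [hs.2]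
    exact mul_nonneg (Real.rpow_nonneg hs.1.le _) (Real.rpow_nonneg hs1 _)
  constructor
  · linarith
  · nlinarith
end
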